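/- Let (x_i)_i be a normalized block sequence in X̃_iw. Then there exist an infinite set L ⊆ ℕ and K_0 ∈ ℕ ∪ {0} such that for all j, k ∈ ℕ with k ≤ n_j − K_0, every finite F ⊆ L for which (x_i)_{i∈F} is S_k-admissible, and all scalars (c_i)_{i∈F}, one has |||Σ_{i∈F} c_i x_i||| ≥ (1/m_j) Σ_{i∈F} |c_i|. In particular, every normalized block sequence in X̃_iw has a subsequence that generates a spreading model equivalent to the unit vector basis of ℓ1. -/

import Mathlib

/-!
The norm of a vector `y ∈ c00` is attained at some functional `f` of the norming set supported
inside the support of `y` (`IWT.exists_norming`): nonzero coefficients of functionals are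
reciprocals of integers, hence isolated, and the norming set is closed under restrictions, so the
relevant functionals form a compact set in the topology of coordinatewise convergence.

Let `f_i` norm `x_i`. If the weights of the `f_i` tend to infinity along a subsequence, one thins
it out so that the weight of each `f_i` exceeds the supports of the earlier terms, and `K₀ = 0`
works. Otherwise infinitely many `f_i = m_j⁻¹ ∑_q f_{i,q}` have weight at most some `M`. As
`m_j ≥ 2` and `f_{i,0}(x_i) ≤ 1`, the remaining components satisfy `∑_{q ≥ 1} f_{i,q}(x_i) ≥ 1`;
they are `S_{n_M}`-admissible, and by the very fast growing condition their weights exceed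
`min supp x_i`, hence the supports of the earlier terms. So in both cases each `x_i` carries an
`S_K`-admissible family of functionals summing to at least `1` on `x_i`, and the families of
different `i` concatenate to very fast growing sequences (`IWT.exists_pieces`). If `(x_i)_{i ∈ F}`
is `S_k`-admissible and `k + K ≤ n_j`, the union of the families over `F`, with signs matching
those of the `c_i`, is `S_{n_j}`-admissible (`IWT.schreier_comp`), and the corresponding functional
of weight `m_j` yields the lower estimate (`IWT.lower_estimate`).

For the spreading model, a further subsequence generates one by the Brunel–Sucheston theorem
(`IWT.exists_spreadingModel`). Any `m` terms taken far enough out are `S_1`-admissible, so the lower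
estimate with `k = 1` and a fixed `j` passes to the limit; the upper ℓ₁ estimate is the triangle
inequality.
-/

open Filter Topology
open scoped ENNReal

noncomputable section

/-! ### Abstract Banach space notions -/

section Abstract

variable {X : Type*} [NormedAddCommGroup X] [NormedSpace ℝ X]

/-- A sequence is normalized if every term has norm one. -/
def Normalized (x : ℕ → X) : Prop := ∀ i, ‖x i‖ = 1

/-- A sequence is weakly null if it tends to `0` in the weak topology. -/
def WeaklyNull (x : ℕ → X) : Prop :=
  ∀ f : X →L[ℝ] ℝ, Tendsto (fun i => f (x i)) atTop (𝓝 (0 : ℝ))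

end Abstract

/-- The ℓ₁ norm of finite coefficient vectors (the norms of finite linear
combinations of the unit vector basis of ℓ₁). -/
def l1Norm : ∀ m : ℕ, (Fin m → ℝ) → ℝ := fun _ a => ∑ i, |a i|

/-- The sup norm of finite coefficient vectors (the norms of finite linear
combinations of the unit vector basis of c₀). -/
def supNorm : ∀ m : ℕ, (Fin m → ℝ) → ℝ := fun _ a => ⨆ i, |a i|

/-- The ℓ_p norm of finite coefficient vectors, `1 ≤ p < ∞`. -/
def lpNormFin (p : ℝ) : ∀ m : ℕ, (Fin m → ℝ) → ℝ := fun _ a => (∑ i, |a i| ^ p) ^ (1 / p)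

/-- The ℓ_q norms of finite coefficient vectors, `q ∈ [1,∞]`, where `q = ∞`
corresponds to `c₀`. -/
def finLqNorm (q : ℝ≥0∞) : ∀ m : ℕ, (Fin m → ℝ) → ℝ := fun m a =>
  if q = ⊤ then supNorm m a else lpNormFin q.toReal m a

/-- The family of seminorms `ν` (of finite combinations of a sequence in a seminormed
space) is `C`-equivalent to the family `μ`:  there are `A B > 0` with `A * B ≤ C` and
`(1/A) * μ ≤ ν ≤ B * μ`. -/
def NormFamEquiv (C : ℝ) (μ ν : ∀ m : ℕ, (Fin m → ℝ) → ℝ) : Prop :=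
  ∃ A B : ℝ, 0 < A ∧ 0 < B ∧ A * B ≤ C ∧
    ∀ (m : ℕ) (a : Fin m → ℝ), (1 / A) * μ m a ≤ ν m a ∧ ν m a ≤ B * μ m a

section Abstract2

variable {X : Type*} [NormedAddCommGroup X] [NormedSpace ℝ X]

/-- The sequence `x` generates the spreading model whose finite-combination
seminorms are given by the family `ν`. -/
def GeneratesSpreadingModel (x : ℕ → X) (ν : ∀ m : ℕ, (Fin m → ℝ) → ℝ) : Prop :=
  ∀ (m : ℕ) (a : Fin m → ℝ), ∀ ε > (0 : ℝ), ∃ N : ℕ, ∀ j : Fin m → ℕ,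
    StrictMono j → (∀ i, N ≤ j i) → |‖∑ i, a i • x (j i)‖ - ν m a| < ε

/-- The array of sequences `A` (row `A i` is the `i`-th sequence) generates the
asymptotic model whose finite-combination seminorms are given by `ν`. -/
def GeneratesAsymptoticModel (A : ℕ → ℕ → X) (ν : ∀ l : ℕ, (Fin l → ℝ) → ℝ) : Prop :=
  ∀ (l : ℕ) (a : Fin l → ℝ), ∀ ε > (0 : ℝ), ∃ N : ℕ, ∀ j : Fin l → ℕ,
    StrictMono j → (∀ i, N ≤ j i) → |‖∑ i, a i • A i (j i)‖ - ν l a| < ε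

/-- `e` is a Schauder basis of `X`. -/
def IsSchauderBasis (e : ℕ → X) : Prop :=
  ∀ x : X, ∃! a : ℕ → ℝ,
    Tendsto (fun n => ∑ i ∈ Finset.range n, a i • e i) atTop (𝓝 x)

/-- The basis `e` is 1-unconditional. -/
def OneUnconditional (e : ℕ → X) : Prop :=
  ∀ (F : Finset ℕ) (a ε : ℕ → ℝ), (∀ i, ε i = 1 ∨ ε i = -1) →
    ‖∑ i ∈ F, (ε i * a i) • e i‖ = ‖∑ i ∈ F, a i • e i‖

/-- `x` is a block sequence with respect to the basis `e`. -/
def IsBlockSeq (e : ℕ → X) (x : ℕ → X) : Prop :=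
  ∃ F : ℕ → Finset ℕ, (∀ k, (F k).Nonempty) ∧
    (∀ k l : ℕ, k < l → ∀ i ∈ F k, ∀ j ∈ F l, i < j) ∧
    ∀ k, x k ≠ 0 ∧ x k ∈ Submodule.span ℝ (e '' ↑(F k))

/-- `z` is a finite block sequence with respect to the basis `e`. -/
def IsFinBlockSeq (e : ℕ → X) {n : ℕ} (z : Fin n → X) : Prop :=
  ∃ F : Fin n → Finset ℕ, (∀ k, (F k).Nonempty) ∧
    (∀ k l : Fin n, k < l → ∀ i ∈ F k, ∀ j ∈ F l, i < j) ∧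
    ∀ k, z k ≠ 0 ∧ z k ∈ Submodule.span ℝ (e '' ↑(F k))

/-- `Y` is a block subspace of `X` (with respect to the basis `e`): the closed
linear span of an infinite normalized block sequence. -/
def IsBlockSubspace (e : ℕ → X) (Y : Set X) : Prop :=
  ∃ y : ℕ → X, IsBlockSeq e y ∧ Normalized y ∧
    Y = closure (↑(Submodule.span ℝ (Set.range y)) : Set X)

/-- The finite sequence `z` is `C`-equivalent to a finite basic sequence whose
finite-combination norms are given by `μ`. -/
def FinSeqEquiv (C : ℝ) {n : ℕ} (μ : (Fin n → ℝ) → ℝ) (z : Fin n → X) : Prop :=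
  ∃ A B : ℝ, 0 < A ∧ 0 < B ∧ A * B ≤ C ∧
    ∀ a : Fin n → ℝ, (1 / A) * μ a ≤ ‖∑ i, a i • z i‖ ∧ ‖∑ i, a i • z i‖ ≤ B * μ a

/-- The finite basic sequence with combination norms `μ` is block representable
in `Y ⊆ X`. -/
def BlockRepresentableIn (e : ℕ → X) (Y : Set X) {n : ℕ} (μ : (Fin n → ℝ) → ℝ) : Prop :=
  ∀ ε > (0 : ℝ), ∃ z : Fin n → X, (∀ i, z i ∈ Y) ∧ IsFinBlockSeq e z ∧
    FinSeqEquiv (1 + ε) μ z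

/-- `x` is a (Schauder) basic sequence. -/
def IsBasicSeq (x : ℕ → X) : Prop :=
  (∀ i, x i ≠ 0) ∧ ∃ K : ℝ, 0 < K ∧ ∀ (a : ℕ → ℝ) (m n : ℕ), m ≤ n →
    ‖∑ i ∈ Finset.range m, a i • x i‖ ≤ K * ‖∑ i ∈ Finset.range n, a i • x i‖

end Abstract2

/-- A plegma of `k` strictly increasing `l`-tuples of naturals. -/
def IsPlegma (k l : ℕ) (s : Fin k → Fin l → ℕ) : Prop :=
  (∀ i, StrictMono (s i)) ∧
  (∀ i₁ i₂ : Fin k, ∀ j₁ j₂ : Fin l, j₁ < j₂ → s i₁ j₁ < s i₂ j₂) ∧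
  (∀ i₁ i₂ : Fin k, i₁ < i₂ → ∀ j, s i₁ j ≤ s i₂ j)

/-- A strict plegma: a plegma with pairwise disjoint tuples. -/
def IsStrictPlegma (k l : ℕ) (s : Fin k → Fin l → ℕ) : Prop :=
  IsPlegma k l s ∧ ∀ i₁ i₂ : Fin k, i₁ ≠ i₂ → ∀ j₁ j₂ : Fin l, s i₁ j₁ ≠ s i₂ j₂

section Abstract3

variable {X : Type*} [NormedAddCommGroup X] [NormedSpace ℝ X]

/-- The `l`-array `x` generates the joint spreading model with finite-combination
seminorms `ν`. -/
def GeneratesJSM (l : ℕ) (x : Fin l → ℕ → X)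
    (ν : ∀ k : ℕ, (Fin l → Fin k → ℝ) → ℝ) : Prop :=
  ∀ (k : ℕ) (a : Fin l → Fin k → ℝ), ∀ ε > (0 : ℝ), ∃ N : ℕ,
    ∀ s : Fin l → Fin k → ℕ, IsStrictPlegma l k s → (∀ i j, N ≤ s i j) →
      |‖∑ i, ∑ j, a i j • x i (s i j)‖ - ν k a| < ε

/-- `X` admits a unique joint spreading model with respect to the family of
sequences `F`. -/
def UniqueJSM (F : Set (ℕ → X)) : Prop :=
  ∃ C : ℝ, 1 ≤ C ∧ ∀ (l : ℕ) (x y : Fin l → ℕ → X),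
    (∀ i, x i ∈ F) → (∀ i, y i ∈ F) →
    ∀ ν μ, GeneratesJSM l x ν → GeneratesJSM l y μ →
      ∃ A B : ℝ, 0 < A ∧ 0 < B ∧ A * B ≤ C ∧
        ∀ (k : ℕ) (a : Fin l → Fin k → ℝ),
          (1 / A) * μ k a ≤ ν k a ∧ ν k a ≤ B * μ k a

/-- `X` admits a unique asymptotic model with respect to the family of
sequences `F`. -/
def UniqueAM (F : Set (ℕ → X)) : Prop :=
  ∀ x y : ℕ → ℕ → X, (∀ i, x i ∈ F) → (∀ i, y i ∈ F) →
    ∀ ν μ, GeneratesAsymptoticModel x ν → GeneratesAsymptoticModel y μ →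
      ∃ C : ℝ, 1 ≤ C ∧ NormFamEquiv C μ ν

end Abstract3

/-- A bundled Banach-space candidate. -/
structure BanachPkg : Type 1 where
  X : Type
  [grp : NormedAddCommGroup X]
  [mod : NormedSpace ℝ X]

attribute [instance] BanachPkg.grp BanachPkg.mod

/-! ### c₀₀ and the norming sets -/

/-- The finitely supported real sequences. -/
abbrev c00 : Type := ℕ →₀ ℝ

/-- Minimum of the support (0 for the zero vector). -/
def minSupp (x : c00) : ℕ := if h : x.support.Nonempty then x.support.min' h else 0

/-- Maximum of the support (0 for the zero vector). -/
def maxSupp (x : c00) : ℕ := if h : x.support.Nonempty then x.support.max' h else 0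

/-- Minimum of a finset of naturals (0 if empty). -/
def finsetMin (F : Finset ℕ) : ℕ := if h : F.Nonempty then F.min' h else 0

/-- `x < y` as successive (block) vectors. -/
def Blocks (x y : c00) : Prop := maxSupp x < minSupp y

/-- The Schreier families. -/
def Schreier : ℕ → Set (Finset ℕ)
  | 0 => {F | ∃ i : ℕ, F = {i}}
  | n + 1 => {F | ∃ (d : ℕ) (G : Fin d → Finset ℕ),
      (∀ k, G k ∈ Schreier n) ∧
      (∀ k l : Fin d, k < l → ∀ i ∈ G k, ∀ j ∈ G l, i < j) ∧
      (∀ i ∈ F, d ≤ i) ∧ F = Finset.univ.biUnion G}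

/-- The family `A_m` of sets of cardinality at most `m`. -/
def SchreierA (m : ℕ) : Set (Finset ℕ) := {F | F.card ≤ m}

/-- The operation `A * B` on families of finite sets. -/
def famStar (A B : Set (Finset ℕ)) : Set (Finset ℕ) :=
  {F | ∃ (d : ℕ) (G : Fin d → Finset ℕ),
      (∀ k, G k ∈ B) ∧ (∀ k, (G k).Nonempty) ∧
      (∀ k l : Fin d, k < l → ∀ i ∈ G k, ∀ j ∈ G l, i < j) ∧
      (Finset.univ.image fun k => finsetMin (G k)) ∈ A ∧ F = Finset.univ.biUnion G}

/-- A finite block sequence in `c00` is `S`-admissible. -/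
def Admissible (S : Set (Finset ℕ)) {d : ℕ} (f : Fin d → c00) : Prop :=
  (∀ q, (f q).support.Nonempty) ∧
  (∀ q r : Fin d, q < r → Blocks (f q) (f r)) ∧
  (Finset.univ.image fun q => minSupp (f q)) ∈ S

/-- The two fixed sequences `(m_j)`, `(n_j)` (indexed here starting at `0`, so that
`m 0` plays the role of `m_1` etc.) together with their growth conditions. -/
structure IWParams where
  m : ℕ → ℕ
  n : ℕ → ℕ
  m_mono : StrictMono m
  n_mono : StrictMono n
  m_first : m 0 = 2
  n_first : n 0 = 1
  growth_exp : ∀ C : ℝ, 1 < C → Tendsto (fun j => C ^ (n j) / (m j : ℝ)) atTop atTop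
  growth_ratio : Tendsto (fun j => (m j : ℝ) / (m (j + 1) : ℝ)) atTop (𝓝 0)
  growth_sum : ∀ (l : ℕ) (js : Fin l → ℕ) (j : ℕ), (∀ i, js i ≤ j) →
    (∏ i, m (js i)) < m (j + 1) ^ 2 → (∑ i, n (js i)) + 1 < n (j + 1)

/-- The action of a functional `f ∈ c00` on a vector `x ∈ c00`. -/
def evalPair (f x : c00) : ℝ := f.sum fun i a => a * x i

/-- The norming set `W_iw`, together with admissible weights: `WIW P f w` means
that `f` belongs to the norming set and `w` is a weight of (one representation of)
`f`; the unit functionals `±e_i^*` have weight `∞`. -/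
inductive WIW (P : IWParams) : c00 → ℕ∞ → Prop
  | unit (i : ℕ) (s : ℝ) (hs : s = 1 ∨ s = -1) : WIW P (Finsupp.single i s) ⊤
  | op (l : ℕ) (hl : 0 < l) (js : Fin l → ℕ) (d : ℕ) (f : Fin d → c00) (w : Fin d → ℕ∞)
      (hf : ∀ q, WIW P (f q) (w q))
      (hadm : Admissible (Schreier (∑ i, P.n (js i))) f)
      (hvfg : ∀ q r : Fin d, (q : ℕ) + 1 = (r : ℕ) → (maxSupp (f q) : ℕ∞) < w r) :
      WIW P (((∏ i, P.m (js i) : ℕ) : ℝ)⁻¹ • ∑ q, f q) ((∏ i, P.m (js i) : ℕ) : ℕ∞)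

/-- Membership in the norming set `W_iw`. -/
def memWIW (P : IWParams) (f : c00) : Prop := ∃ w, WIW P f w

/-- The norm of `X_iw`, on finitely supported vectors. -/
def iwNorm (P : IWParams) (x : c00) : ℝ :=
  sSup {r | ∃ f, memWIW P f ∧ r = evalPair f x}

/-- The dual norm of a finitely supported functional, as an element of `X_iw^*`. -/
def iwDualNorm (P : IWParams) (f : c00) : ℝ :=
  sSup {r | ∃ x : c00, iwNorm P x ≤ 1 ∧ r = evalPair f x}

/-- The auxiliary norming set `W_aux^N` together with admissible weights. -/
inductive WAux (P : IWParams) (N : ℕ) : c00 → ℕ∞ → Prop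
  | unit (i : ℕ) (s : ℝ) (hs : s = 1 ∨ s = -1) : WAux P N (Finsupp.single i s) ⊤
  | op (l : ℕ) (hl : 0 < l) (js : Fin l → ℕ) (d : ℕ) (f : Fin d → c00) (w : Fin d → ℕ∞)
      (hf : ∀ q, WAux P N (f q) (w q))
      (hadm : Admissible (famStar (Schreier (∑ i, P.n (js i))) (SchreierA 3)) f)
      (hlarge : ∀ q : Fin d, 0 < (q : ℕ) → (N : ℕ∞) < w q) :
      WAux P N (((∏ i, P.m (js i) : ℕ) : ℝ)⁻¹ • ∑ q, f q) ((∏ i, P.m (js i) : ℕ) : ℕ∞)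

/-- An `(n, ε)` basic special convex combination. -/
def IsBasicSCC (n : ℕ) (ε : ℝ) (x : c00) : Prop :=
  ∃ F : Finset ℕ, x.support ⊆ F ∧ F ∈ Schreier n ∧ (∀ i, 0 ≤ x i) ∧
    (∑ i ∈ F, x i) = 1 ∧ ∀ G ⊆ F, G ∈ Schreier (n - 1) → (∑ i ∈ G, x i) < ε

/-- An `(n, ε)` special convex combination `∑ c i • x i`. -/
def IsSCC (n : ℕ) (ε : ℝ) {m : ℕ} (c : Fin m → ℝ) (x : Fin m → c00) : Prop :=
  (∀ i, (x i).support.Nonempty) ∧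
  (∀ i j : Fin m, i < j → Blocks (x i) (x j)) ∧
  IsBasicSCC n ε (∑ i, c i • Finsupp.single (minSupp (x i)) (1 : ℝ))

/-- `x` generates, with respect to the norm function `Nrm` on `c00`, the spreading
model whose finite-combination seminorms are `ν`. -/
def GeneratesSMwith (Nrm : c00 → ℝ) (x : ℕ → c00) (ν : ∀ m : ℕ, (Fin m → ℝ) → ℝ) : Prop :=
  ∀ (m : ℕ) (a : Fin m → ℝ), ∀ ε > (0 : ℝ), ∃ N : ℕ, ∀ j : Fin m → ℕ,
    StrictMono j → (∀ i, N ≤ j i) → |Nrm (∑ i, a i • x (j i)) - ν m a| < ε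

/-- The array `A` generates, with respect to the norm function `Nrm` on `c00`, the
asymptotic model whose finite-combination seminorms are `ν`. -/
def GeneratesAMwith (Nrm : c00 → ℝ) (A : ℕ → ℕ → c00) (ν : ∀ l : ℕ, (Fin l → ℝ) → ℝ) : Prop :=
  ∀ (l : ℕ) (a : Fin l → ℝ), ∀ ε > (0 : ℝ), ∃ N : ℕ, ∀ j : Fin l → ℕ,
    StrictMono j → (∀ i, N ≤ j i) → |Nrm (∑ i, a i • A i (j i)) - ν l a| < ε

/-- A normalized block sequence in `c00` with respect to a norm function. -/
def IsNormBlockSeq (Nrm : c00 → ℝ) (y : ℕ → c00) : Prop :=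
  (∀ k, (y k).support.Nonempty) ∧ (∀ k, Blocks (y k) (y (k + 1))) ∧ ∀ k, Nrm (y k) = 1

/-- A `(C, (j_i)_{i ∈ I})` rapidly increasing sequence, `I` a (finite) interval. -/
def IsRIS (P : IWParams) (C : ℝ) (I : Finset ℕ) (j : ℕ → ℕ) (x : ℕ → c00) : Prop :=
  (∀ a ∈ I, ∀ b ∈ I, ∀ c : ℕ, a ≤ c → c ≤ b → c ∈ I) ∧
  (∀ a ∈ I, ∀ b ∈ I, a < b → j a < j b) ∧
  (∀ i ∈ I, (x i).support.Nonempty) ∧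
  (∀ a ∈ I, ∀ b ∈ I, a < b → Blocks (x a) (x b)) ∧
  (∀ i ∈ I, iwNorm P (x i) ≤ C) ∧
  (∀ i ∈ I, ∀ i' ∈ I, i' + 1 = i → (maxSupp (x i') : ℝ) < Real.sqrt (P.m (j i))) ∧
  (∀ i ∈ I, ∀ f w, WIW P f w → w < ((P.m (j i) : ℕ) : ℕ∞) →
    |evalPair f (x i)| ≤ C / (w.toNat : ℝ))

/-- An infinite `(C, (j_i)_i)` rapidly increasing sequence. -/
def IsRISNat (P : IWParams) (C : ℝ) (j : ℕ → ℕ) (x : ℕ → c00) : Prop :=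
  StrictMono j ∧ (∀ i, (x i).support.Nonempty) ∧ (∀ i, Blocks (x i) (x (i + 1))) ∧
  (∀ i, iwNorm P (x i) ≤ C) ∧
  (∀ i, (maxSupp (x i) : ℝ) < Real.sqrt (P.m (j (i + 1)))) ∧
  (∀ i, ∀ f w, WIW P f w → w < ((P.m (j i) : ℕ) : ℕ∞) →
    |evalPair f (x i)| ≤ C / (w.toNat : ℝ))

/-- `X` together with the basis `e` is a realization of the space `X_iw`: a Banach
space in which `c00` sits isometrically (w.r.t. `iwNorm`) and densely. -/
structure IsIWRealization (P : IWParams) (X : Type*) [NormedAddCommGroup X]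
    [NormedSpace ℝ X] (e : ℕ → X) : Prop where
  complete : CompleteSpace X
  dense : DenseRange fun a : c00 => ∑ i ∈ a.support, a i • e i
  norm_eq : ∀ a : c00, ‖∑ i ∈ a.support, a i • e i‖ = iwNorm P a

/-- The conjugate exponent of `p`. -/
def conjExp (p : ℝ) : ℝ := p / (p - 1)

/-- The norming set `W_iw^p` together with admissible weights. -/
inductive WIWp (P : IWParams) (p : ℝ) : c00 → ℕ∞ → Prop
  | unit (i : ℕ) (s : ℝ) (hs : s = 1 ∨ s = -1) : WIWp P p (Finsupp.single i s) ⊤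
  | op (l : ℕ) (hl : 0 < l) (js : Fin l → ℕ) (d : ℕ) (f : Fin d → c00) (w : Fin d → ℕ∞)
      (lam : Fin d → ℝ) (hlam : (∑ q, |lam q| ^ conjExp p) ≤ 1)
      (hf : ∀ q, WIWp P p (f q) (w q))
      (hadm : Admissible (Schreier (∑ i, P.n (js i))) f)
      (hvfg : ∀ q r : Fin d, (q : ℕ) + 1 = (r : ℕ) → (maxSupp (f q) : ℕ∞) < w r) :
      WIWp P p (((∏ i, P.m (js i) : ℕ) : ℝ)⁻¹ • ∑ q, lam q • f q)
        ((∏ i, P.m (js i) : ℕ) : ℕ∞)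

/-- The norm of `X_iw^p` on finitely supported vectors. -/
def iwpNorm (P : IWParams) (p : ℝ) (x : c00) : ℝ :=
  sSup {r | ∃ f, (∃ w, WIWp P p f w) ∧ r = evalPair f x}

/-- The norming set of the space `X̃_iw`, together with admissible weights. -/
inductive WT (P : IWParams) : c00 → ℕ∞ → Prop
  | unit (i : ℕ) (s : ℝ) (hs : s = 1 ∨ s = -1) : WT P (Finsupp.single i s) ⊤
  | op (j : ℕ) (d : ℕ) (f : Fin d → c00) (w : Fin d → ℕ∞)
      (hf : ∀ q, WT P (f q) (w q))
      (hadm : Admissible (Schreier (P.n j)) f)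
      (hvfg : ∀ q r : Fin d, (q : ℕ) + 1 = (r : ℕ) → (maxSupp (f q) : ℕ∞) < w r) :
      WT P ((P.m j : ℝ)⁻¹ • ∑ q, f q) ((P.m j : ℕ) : ℕ∞)

/-- The norm of `X̃_iw` on finitely supported vectors. -/
def tNorm (P : IWParams) (x : c00) : ℝ :=
  sSup {r | ∃ f, (∃ w, WT P f w) ∧ r = evalPair f x}

end

namespace IWT

/-! ### Spreading models of bounded sequences -/

section SpreadingModel

variable {E : Type*} [AddCommGroup E] [Module ℝ E]

/-- The iterated limits
`lim_{n₁} ⋯ lim_{n_m} p (y + ∑ aᵢ x_{nᵢ})` along the fixed nonprincipal ultrafilter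
`hyperfilter ℕ`. -/
noncomputable def iterLim (p : Seminorm ℝ E) (x : ℕ → E) : ∀ m : ℕ, E → (Fin m → ℝ) → ℝ
  | 0 => fun y _ => p y
  | m + 1 => fun y a =>
      limUnder (hyperfilter ℕ : Filter ℕ)
        (fun n => iterLim p x m (y + a 0 • x n) (fun i => a i.succ))

lemma tendsto_limUnder_of_bdd {f : ℕ → ℝ} {r : ℝ} (h : ∀ n, f n ∈ Set.Icc 0 r) :
    Tendsto f (hyperfilter ℕ : Filter ℕ) (𝓝 (limUnder (hyperfilter ℕ : Filter ℕ) f)) := by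
  obtain ⟨l, -, hl⟩ := (isCompact_Icc (a := (0 : ℝ)) (b := r)).ultrafilter_le_nhds
    ((hyperfilter ℕ).map f) (by
      simp only [le_principal_iff]
      exact Filter.univ_mem' (f := (hyperfilter ℕ : Filter ℕ)) h)
  exact tendsto_nhds_limUnder ⟨l, hl⟩

lemma iterLim_mem (p : Seminorm ℝ E) (x : ℕ → E) (hx : ∀ n, p (x n) ≤ 1) :
    ∀ (m : ℕ) (y : E) (a : Fin m → ℝ), iterLim p x m y a ∈ Set.Icc 0 (p y + ∑ i, |a i|) := by
  intro m
  induction m with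
  | zero => intro y a; simp [iterLim]
  | succ m ih =>
    intro y a
    have key : ∀ n, iterLim p x m (y + a 0 • x n) (fun i => a i.succ) ∈
        Set.Icc 0 (p y + ∑ i, |a i|) := by
      intro n
      have h := ih (y + a 0 • x n) (fun i => a i.succ)
      refine ⟨h.1, h.2.trans ?_⟩
      rw [Fin.sum_univ_succ]
      have h1 := map_add_le_add p y (a 0 • x n)
      have h2 : p (a 0 • x n) ≤ |a 0| := by
        rw [map_smul_eq_mul, Real.norm_eq_abs]
        exact mul_le_of_le_one_right (abs_nonneg _) (hx n)
      linarith
    exact isClosed_Icc.mem_of_tendsto (tendsto_limUnder_of_bdd key)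
      (Filter.Eventually.of_forall key)

lemma iterLim_tendsto (p : Seminorm ℝ E) (x : ℕ → E) (hx : ∀ n, p (x n) ≤ 1)
    (m : ℕ) (y : E) (a : Fin (m + 1) → ℝ) :
    Tendsto (fun n => iterLim p x m (y + a 0 • x n) (fun i => a i.succ))
      (hyperfilter ℕ : Filter ℕ) (𝓝 (iterLim p x (m + 1) y a)) := by
  refine tendsto_limUnder_of_bdd (r := p y + ∑ i, |a i|) fun n => ?_
  have h := iterLim_mem p x hx m (y + a 0 • x n) (fun i => a i.succ)
  refine ⟨h.1, h.2.trans ?_⟩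
  rw [Fin.sum_univ_succ]
  have h1 := map_add_le_add p y (a 0 • x n)
  have h2 : p (a 0 • x n) ≤ |a 0| := by
    rw [map_smul_eq_mul, Real.norm_eq_abs]
    exact mul_le_of_le_one_right (abs_nonneg _) (hx n)
  linarith

lemma iterLim_lipschitz (p : Seminorm ℝ E) (x : ℕ → E) (hx : ∀ n, p (x n) ≤ 1) :
    ∀ (m : ℕ) (y : E) (a b : Fin m → ℝ),
      ∀ z : E, |iterLim p x m y a - iterLim p x m z b| ≤ p (y - z) + ∑ i, |a i - b i| := by
  intro m
  induction m with
  | zero => intro y a b z; simpa [iterLim] using abs_sub_map_le_sub p y z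
  | succ m ih =>
    intro y a b z
    refine le_of_tendsto ((iterLim_tendsto p x hx m y a).sub
      (iterLim_tendsto p x hx m z b)).abs (Filter.Eventually.of_forall fun n => ?_)
    refine (ih _ _ _ _).trans ?_
    rw [Fin.sum_univ_succ]
    have h0 : y + a 0 • x n - (z + b 0 • x n) = (y - z) + (a 0 - b 0) • x n := by module
    have h1 := map_add_le_add p (y - z) ((a 0 - b 0) • x n)
    have h2 : p ((a 0 - b 0) • x n) ≤ |a 0 - b 0| := by
      rw [map_smul_eq_mul, Real.norm_eq_abs]
      exact mul_le_of_le_one_right (abs_nonneg _) (hx n)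
    rw [h0]
    linarith

/-- The finite set of combinations `∑_{i < s} cᵢ xᵢ` in which each `cᵢ` is `0` or one of the
first `i + 1` terms of the sequence `q`. -/
def netVec (x : ℕ → E) (q : ℕ → ℝ) : ℕ → Set E
  | 0 => {0}
  | s + 1 => netVec x q s ∪ Set.image2 (fun y b => y + q b • x s) (netVec x q s) (Set.Iic s)

lemma netVec_finite (x : ℕ → E) (q : ℕ → ℝ) (s : ℕ) : (netVec x q s).Finite := by
  induction s with
  | zero => exact Set.finite_singleton _
  | succ s ih => exact ih.union (ih.image2 _ (Set.finite_Iic s))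

lemma netVec_mono (x : ℕ → E) (q : ℕ → ℝ) : Monotone (netVec x q) :=
  monotone_nat_of_le_succ fun _ => Set.subset_union_left

lemma zero_mem_netVec (x : ℕ → E) (q : ℕ → ℝ) (s : ℕ) : (0 : E) ∈ netVec x q s :=
  netVec_mono x q (Nat.zero_le s) rfl

/-- Brunel–Sucheston: a bounded sequence has a subsequence generating a spreading model. The
subsequence is chosen so that each new term approximates finitely many of the iterated ultrafilter
limits (those with rational coefficients that have been enumerated so far). -/
theorem exists_spreadingModel (p : Seminorm ℝ E) (x : ℕ → E) (hx : ∀ n, p (x n) ≤ 1) :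
    ∃ φ : ℕ → ℕ, StrictMono φ ∧ ∃ ν : ∀ m : ℕ, (Fin m → ℝ) → ℝ,
      ∀ (m : ℕ) (a : Fin m → ℝ), ∀ ε > (0 : ℝ), ∃ N : ℕ, ∀ j : Fin m → ℕ,
        StrictMono j → (∀ i, N ≤ j i) → |p (∑ i, a i • x (φ (j i))) - ν m a| < ε := by
  classical
  obtain ⟨q, hq⟩ := exists_surjective_nat ℚ
  obtain ⟨en, hen⟩ := exists_surjective_nat (Σ m : ℕ, Fin (m + 1) → ℚ)
  let qr : ℕ → ℝ := fun n => (q n : ℝ)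
  let r : ℕ → ℕ → Prop := fun s k => s < k ∧ ∀ y ∈ netVec x qr (s + 1), ∀ t ∈ Set.Iic s,
    |iterLim p x (en t).1 (y + ((en t).2 0 : ℝ) • x k) (fun i => ((en t).2 i.succ : ℝ)) -
      iterLim p x ((en t).1 + 1) y (fun i => ((en t).2 i : ℝ))| < (1 / 2) ^ s
  have hr : ∀ s, ∀ᶠ k in (hyperfilter ℕ : Filter ℕ), r s k := by
    intro s
    refine Filter.Eventually.and ?_ ?_
    · exact Nat.hyperfilter_le_atTop (eventually_gt_atTop s)
    · rw [Filter.eventually_all_finite (netVec_finite x qr (s + 1))]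
      intro y _
      rw [Filter.eventually_all_finite (Set.finite_Iic s)]
      intro t _
      have h := iterLim_tendsto p x hx (en t).1 y (fun i => ((en t).2 i : ℝ))
      have h2 := (Metric.tendsto_nhds.1 h) ((1 / 2) ^ s) (by positivity)
      simpa only [Real.dist_eq] using h2
  obtain ⟨φ, -, hφ⟩ := exists_seq_of_forall_finset_exists (fun _ : ℕ => True) r (by
    intro s _
    have h : ∀ᶠ k in (hyperfilter ℕ : Filter ℕ), ∀ t ∈ s, r t k :=
      (Filter.eventually_all_finset s).2 fun t _ => hr t
    obtain ⟨k, hk⟩ := h.exists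
    exact ⟨k, trivial, hk⟩)
  have hmono : StrictMono φ := fun m n h => (hφ m n h).1
  -- Telescoping: each limit is replaced by an actual term, at cost `(1/2)^n` apiece.
  have tele : ∀ (m : ℕ) (a : Fin m → ℚ), ∃ B : ℕ, ∀ n ≥ B, ∀ y ∈ netVec x qr (φ n + 1),
      ∀ j : Fin m → ℕ, StrictMono j → (∀ i, n < j i) →
      |p (y + ∑ i, (a i : ℝ) • x (φ (j i))) - iterLim p x m y (fun i => (a i : ℝ))| ≤
        m * (1 / 2) ^ n := by
    intro m
    induction m with
    | zero => intro a; refine ⟨0, fun n _ y _ j _ _ => ?_⟩; simp [iterLim]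
    | succ m ih =>
      intro a
      obtain ⟨B, hB⟩ := ih (fun i => a i.succ)
      obtain ⟨t, ht⟩ := hen ⟨m, a⟩
      obtain ⟨b, hb⟩ := hq (a 0)
      refine ⟨B + t + b, fun n hn y hy j hj hnj => ?_⟩
      have h1 := (hφ n (j 0) (hnj 0)).2 y hy t
        (by have := hmono.le_apply (x := n); simp only [Set.mem_Iic]; omega)
      rw [ht] at h1
      dsimp only at h1
      have hy' : y + (a 0 : ℝ) • x (φ (j 0)) ∈ netVec x qr (φ (j 0) + 1) := by
        refine Or.inr ⟨y, netVec_mono x qr (hmono (hnj 0)) hy, b, ?_, ?_⟩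
        · have := hmono.le_apply (x := j 0)
          have := hnj 0
          simp only [Set.mem_Iic]; omega
        · simp [qr, hb]
      have h2 := hB (j 0) (by have := hnj 0; omega) _ hy' (fun i => j i.succ)
        (fun i i' h => hj (Fin.succ_lt_succ_iff.2 h)) (fun i => hj (Fin.succ_pos i))
      rw [Fin.sum_univ_succ, ← add_assoc]
      have e1 : ((1 : ℝ) / 2) ^ φ n ≤ (1 / 2) ^ n :=
        pow_le_pow_of_le_one (by norm_num) (by norm_num) hmono.le_apply
      have e2 : (m : ℝ) * ((1 : ℝ) / 2) ^ j 0 ≤ m * (1 / 2) ^ n :=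
        mul_le_mul_of_nonneg_left
          (pow_le_pow_of_le_one (by norm_num) (by norm_num) (hnj 0).le) (by positivity)
      have h3 := abs_sub_le
        (p (y + (a 0 : ℝ) • x (φ (j 0)) + ∑ i : Fin m, (a i.succ : ℝ) • x (φ (j i.succ))))
        (iterLim p x m (y + (a 0 : ℝ) • x (φ (j 0))) (fun i => (a i.succ : ℝ)))
        (iterLim p x (m + 1) y (fun i => (a i : ℝ)))
      push_cast
      linarith
  refine ⟨φ, hmono, fun m a => iterLim p x m 0 a, fun m a ε hε => ?_⟩
  have hδ : 0 < ε / (4 * (m + 1)) := by positivity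
  choose a' ha' using fun i => exists_rat_near (a i) hδ
  obtain ⟨B, hB⟩ := tele m a'
  obtain ⟨n, hn⟩ := exists_pow_lt_of_lt_one hδ (show (1 / 2 : ℝ) < 1 by norm_num)
  refine ⟨B + n + 1, fun j hj hN => ?_⟩
  have h1 := hB (B + n) (by omega) 0 (zero_mem_netVec x qr _) j hj
    (fun i => by have := hN i; omega)
  rw [zero_add] at h1
  have hs : ∑ i, |a i - a' i| ≤ m * (ε / (4 * (m + 1))) := by
    refine (Finset.sum_le_sum fun i _ => (ha' i).le).trans ?_
    simp
  have h2 := iterLim_lipschitz p x hx m 0 a (fun i => (a' i : ℝ)) 0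
  have h3 : |p (∑ i, a i • x (φ (j i))) - p (∑ i, (a' i : ℝ) • x (φ (j i)))| ≤
      ∑ i, |a i - a' i| := by
    refine (abs_sub_map_le_sub p _ _).trans ?_
    rw [← Finset.sum_sub_distrib]
    refine (Finset.le_sum_of_subadditive p (map_zero p).le (map_add_le_add p) _ _).trans
      (Finset.sum_le_sum fun i _ => ?_)
    rw [← sub_smul, map_smul_eq_mul, Real.norm_eq_abs]
    exact mul_le_of_le_one_right (abs_nonneg _) (hx _)
  simp only [sub_self, map_zero, zero_add] at h2
  have e1 : ((1 : ℝ) / 2) ^ (B + n) ≤ (1 / 2) ^ n :=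
    pow_le_pow_of_le_one (by norm_num) (by norm_num) (by omega)
  have e2 : (m : ℝ) * (1 / 2) ^ (B + n) ≤ m * (ε / (4 * (m + 1))) :=
    mul_le_mul_of_nonneg_left (e1.trans hn.le) (by positivity)
  have e3 : (m : ℝ) * (ε / (4 * (m + 1))) < ε / 4 := by
    rw [mul_div_assoc', div_lt_iff₀ (by positivity)]
    have : (0 : ℝ) ≤ m := by positivity
    nlinarith
  have t1 := abs_le.1 h1
  have t2 := abs_le.1 h2
  have t3 := abs_le.1 h3
  rw [abs_lt]
  constructor <;> linarith [t1.1, t1.2, t2.1, t2.2, t3.1, t3.2]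

end SpreadingModel

/-! ### Schreier families -/

section SchreierFamilies

variable {ι : Type*}

/-- Sufficient condition for `u(T) ∈ S_{n+1}`: a colouring `c` of `T`, monotone with respect to
`u`, with at most `min u(T)` colours, and whose colour classes have `u`-image in `S_n`. -/
lemma schreier_succ_intro (n : ℕ) (T : Finset ι) (u c : ι → ℕ)
    (hmono : ∀ s ∈ T, ∀ t ∈ T, u s ≤ u t → c s ≤ c t)
    (hcard : ∀ t ∈ T, (T.image c).card ≤ u t)
    (hfib : ∀ t ∈ T, (T.filter (fun s => c s = c t)).image u ∈ Schreier n) :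
    T.image u ∈ Schreier (n + 1) := by
  classical
  let e := (T.image c).orderEmbOfFin rfl
  have he : ∀ k, ∃ t ∈ T, c t = e k := fun k =>
    Finset.mem_image.1 ((T.image c).orderEmbOfFin_mem rfl k)
  refine ⟨(T.image c).card, fun k => (T.filter (fun s => c s = e k)).image u, ?_, ?_, ?_, ?_⟩
  · intro k
    obtain ⟨t, ht, hk⟩ := he k
    dsimp only
    rw [← hk]
    exact hfib t ht
  · intro k l hkl i hi j hj
    simp only [Finset.mem_image, Finset.mem_filter] at hi hj
    obtain ⟨s, ⟨hs, hsk⟩, rfl⟩ := hi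
    obtain ⟨t, ⟨ht, htl⟩, rfl⟩ := hj
    by_contra hcon
    have h1 := hmono t ht s hs (not_lt.1 hcon)
    have h2 : e k < e l := e.strictMono hkl
    omega
  · intro i hi
    obtain ⟨t, ht, rfl⟩ := Finset.mem_image.1 hi
    exact hcard t ht
  · ext i
    simp only [Finset.mem_image, Finset.mem_biUnion, Finset.mem_univ, true_and,
      Finset.mem_filter]
    constructor
    · rintro ⟨t, ht, rfl⟩
      have h : c t ∈ Set.range e := by
        rw [Finset.range_orderEmbOfFin]
        exact Finset.mem_coe.2 (Finset.mem_image_of_mem c ht)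
      obtain ⟨k, hk⟩ := h
      exact ⟨k, t, ⟨ht, hk.symm⟩, rfl⟩
    · rintro ⟨k, t, ⟨ht, _⟩, rfl⟩
      exact ⟨t, ht, rfl⟩

/-- The decomposition of a set in `S_{n+1}` into successive members of `S_n`, encoded as a monotone
colouring; a converse to `schreier_succ_intro`. -/
lemma schreier_succ_elim (n : ℕ) (A : Finset ℕ) (hA : A ∈ Schreier (n + 1)) :
    ∃ c : ℕ → ℕ, (∀ a ∈ A, ∀ b ∈ A, a ≤ b → c a ≤ c b) ∧
      (∀ a ∈ A, (A.image c).card ≤ a) ∧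
      ∀ a ∈ A, A.filter (fun b => c b = c a) ∈ Schreier n := by
  classical
  obtain ⟨d, G, hG, hsep, hd, hAG⟩ := hA
  have hex : ∀ a, ∃ k : ℕ, a ∈ A → ∃ h : k < d, a ∈ G ⟨k, h⟩ := by
    intro a
    by_cases ha : a ∈ A
    · rw [hAG] at ha
      obtain ⟨k, -, hk⟩ := Finset.mem_biUnion.1 ha
      exact ⟨k, fun _ => ⟨k.2, hk⟩⟩
    · exact ⟨0, fun h => absurd h ha⟩
  choose c hc using hex
  refine ⟨c, ?_, ?_, ?_⟩
  · intro a ha b hb hab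
    obtain ⟨h1, h1'⟩ := hc a ha
    obtain ⟨h2, h2'⟩ := hc b hb
    by_contra hcon
    have := hsep ⟨c b, h2⟩ ⟨c a, h1⟩ (Fin.mk_lt_mk.2 (not_le.1 hcon)) b h2' a h1'
    omega
  · intro a ha
    refine le_trans ?_ (hd a ha)
    have : A.image c ⊆ Finset.range d := by
      intro k hk
      obtain ⟨b, hb, rfl⟩ := Finset.mem_image.1 hk
      exact Finset.mem_range.2 (hc b hb).1
    simpa using Finset.card_le_card this
  · intro a ha
    obtain ⟨h1, h1'⟩ := hc a ha
    convert hG ⟨c a, h1⟩ using 1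
    ext b
    simp only [Finset.mem_filter]
    constructor
    · rintro ⟨hb, hba⟩
      obtain ⟨h2, h2'⟩ := hc b hb
      have : (⟨c b, h2⟩ : Fin d) = ⟨c a, h1⟩ := Fin.ext hba
      rwa [this] at h2'
    · intro hb
      have hbA : b ∈ A := by
        rw [hAG]
        exact Finset.mem_biUnion.2 ⟨_, Finset.mem_univ _, hb⟩
      refine ⟨hbA, ?_⟩
      obtain ⟨h2, h2'⟩ := hc b hbA
      rcases lt_trichotomy (c b) (c a) with h | h | h
      · exact absurd (hsep ⟨c b, h2⟩ ⟨c a, h1⟩ (Fin.mk_lt_mk.2 h) b h2' b hb) (lt_irrefl b)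
      · exact h
      · exact absurd (hsep ⟨c a, h1⟩ ⟨c b, h2⟩ (Fin.mk_lt_mk.2 h) b hb b h2') (lt_irrefl b)

/-- Composition of Schreier families: if the blocks of `u(T)` over the values of `v` lie in `S_K`
and the values of `v`, each to the left of its block, lie in a set from `S_k`, then
`u(T) ∈ S_{K+k}`. The case `K = 0` says that `S_k` is hereditary and spreading. -/
lemma schreier_comp (K : ℕ) : ∀ (k : ℕ) (A : Finset ℕ) (_ : A ∈ Schreier k) (T : Finset ι)
    (_ : T.Nonempty) (u v : ι → ℕ) (_ : ∀ t ∈ T, v t ∈ A) (_ : ∀ t ∈ T, v t ≤ u t)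
    (_ : ∀ s ∈ T, ∀ t ∈ T, u s ≤ u t → v s ≤ v t)
    (_ : ∀ t ∈ T, (T.filter (fun s => v s = v t)).image u ∈ Schreier K),
    T.image u ∈ Schreier (K + k) := by
  classical
  intro k
  induction k with
  | zero =>
    rintro A ⟨a, rfl⟩ T ⟨t, ht⟩ u v hvA _ _ hfib
    have : T.filter (fun s => v s = v t) = T := by
      refine Finset.filter_true_of_mem fun s hs => ?_
      rw [Finset.mem_singleton.1 (hvA s hs), Finset.mem_singleton.1 (hvA t ht)]
    have h := hfib t ht
    rwa [this] at h
  | succ k ih =>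
    intro A hA T hT u v hvA hvu hmono hfib
    obtain ⟨c, hc1, hc2, hc3⟩ := schreier_succ_elim k A hA
    refine schreier_succ_intro (K + k) T u (fun t => c (v t)) ?_ ?_ ?_
    · intro s hs t ht hst
      exact hc1 _ (hvA s hs) _ (hvA t ht) (hmono s hs t ht hst)
    · intro t ht
      refine le_trans (Finset.card_le_card ?_) ((hc2 _ (hvA t ht)).trans (hvu t ht))
      intro z hz
      obtain ⟨s, hs, rfl⟩ := Finset.mem_image.1 hz
      exact Finset.mem_image_of_mem c (hvA s hs)
    · intro t ht
      refine ih _ (hc3 _ (hvA t ht)) _ ⟨t, by simp [ht]⟩ u v ?_ ?_ ?_ ?_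
      · intro s hs
        rw [Finset.mem_filter] at hs ⊢
        exact ⟨hvA s hs.1, hs.2⟩
      · intro s hs
        exact hvu s (Finset.mem_filter.1 hs).1
      · intro s hs s' hs'
        exact hmono s (Finset.mem_filter.1 hs).1 s' (Finset.mem_filter.1 hs').1
      · intro s hs
        rw [Finset.mem_filter] at hs
        convert hfib s hs.1 using 2
        ext z
        simp only [Finset.mem_filter]
        constructor
        · rintro ⟨⟨h1, _⟩, h3⟩; exact ⟨h1, h3⟩
        · rintro ⟨h1, h3⟩; exact ⟨⟨h1, by rw [h3]; exact hs.2⟩, h3⟩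

lemma schreier_spread (k : ℕ) (A : Finset ℕ) (hA : A ∈ Schreier k) (T : Finset ι)
    (hT : T.Nonempty) (u v : ι → ℕ) (hvA : ∀ t ∈ T, v t ∈ A) (hvu : ∀ t ∈ T, v t ≤ u t)
    (hmono : ∀ s ∈ T, ∀ t ∈ T, u s ≤ u t → v s ≤ v t)
    (hinj : ∀ s ∈ T, ∀ t ∈ T, v s = v t → s = t) :
    T.image u ∈ Schreier k := by
  classical
  have h := schreier_comp 0 k A hA T hT u v hvA hvu hmono (by
    intro t ht
    refine ⟨u t, ?_⟩
    have : T.filter (fun s => v s = v t) = {t} := by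
      ext s
      simp only [Finset.mem_filter, Finset.mem_singleton]
      constructor
      · rintro ⟨hs, h⟩; exact hinj s hs t ht h
      · rintro rfl; exact ⟨ht, rfl⟩
    rw [this, Finset.image_singleton])
  rwa [zero_add] at h

/-- The sets containing `0` are excluded because `{0}` lies in `S_0` only. -/
lemma schreier_mono {n m : ℕ} (h : n ≤ m) (A : Finset ℕ) (hA : A ∈ Schreier n) (h0 : 0 ∉ A) :
    A ∈ Schreier m := by
  classical
  induction m, h using Nat.le_induction with
  | base => exact hA
  | succ m _ ih =>
    have h := schreier_succ_intro m A id (fun _ => 0) (fun _ _ _ _ _ => le_rfl) (by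
      intro t ht
      have h1 : (A.image (fun _ => 0)).card ≤ 1 := by
        refine Finset.card_le_one.2 ?_
        intro a ha b hb
        simp only [Finset.mem_image] at ha hb
        obtain ⟨_, _, rfl⟩ := ha
        obtain ⟨_, _, rfl⟩ := hb
        rfl
      have h2 : t ≠ 0 := fun h => h0 (h ▸ ht)
      simp only [id]
      omega) (by
      intro t _
      simpa using ih)
    simpa using h

/-- Sets with at most `min A` elements are in `S_1`. -/
lemma mem_schreier_one (A : Finset ℕ) (h : ∀ a ∈ A, A.card ≤ a) : A ∈ Schreier 1 := by
  have h' := schreier_succ_intro 0 A id id (fun _ _ _ _ h => h) (by simpa using h) (by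
    intro t ht
    refine ⟨t, ?_⟩
    ext s
    simp only [id, Finset.mem_image, Finset.mem_filter, exists_eq_right, Finset.mem_singleton]
    constructor
    · rintro ⟨_, h⟩; exact h
    · rintro rfl; exact ⟨ht, rfl⟩)
  simpa using h'

end SchreierFamilies

/-! ### Supports and the duality pairing -/

lemma minSupp_le {x : c00} {i : ℕ} (hi : i ∈ x.support) : minSupp x ≤ i := by
  have h : x.support.Nonempty := ⟨i, hi⟩
  rw [minSupp, dif_pos h]
  exact Finset.min'_le _ _ hi

lemma le_maxSupp {x : c00} {i : ℕ} (hi : i ∈ x.support) : i ≤ maxSupp x := by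
  have h : x.support.Nonempty := ⟨i, hi⟩
  rw [maxSupp, dif_pos h]
  exact Finset.le_max' _ _ hi

lemma minSupp_mem {x : c00} (h : x.support.Nonempty) : minSupp x ∈ x.support := by
  rw [minSupp, dif_pos h]
  exact Finset.min'_mem _ _

lemma maxSupp_mem {x : c00} (h : x.support.Nonempty) : maxSupp x ∈ x.support := by
  rw [maxSupp, dif_pos h]
  exact Finset.max'_mem _ _

lemma minSupp_congr {x y : c00} (h : x.support = y.support) : minSupp x = minSupp y := by
  simp only [minSupp, h]

lemma maxSupp_congr {x y : c00} (h : x.support = y.support) : maxSupp x = maxSupp y := by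
  simp only [maxSupp, h]

lemma minSupp_le_maxSupp {x : c00} (h : x.support.Nonempty) : minSupp x ≤ maxSupp x :=
  minSupp_le (maxSupp_mem h)

lemma minSupp_anti {x y : c00} (hx : x.support.Nonempty) (h : x.support ⊆ y.support) :
    minSupp y ≤ minSupp x := minSupp_le (h (minSupp_mem hx))

lemma maxSupp_mono {x y : c00} (hx : x.support.Nonempty) (h : x.support ⊆ y.support) :
    maxSupp x ≤ maxSupp y := le_maxSupp (h (maxSupp_mem hx))

lemma evalPair_eq_linearCombination (f x : c00) :
    evalPair f x = Finsupp.linearCombination ℝ (⇑x) f := by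
  rw [evalPair, Finsupp.linearCombination_apply]; rfl

lemma evalPair_sum_left {ι : Type*} (T : Finset ι) (f : ι → c00) (x : c00) :
    evalPair (∑ t ∈ T, f t) x = ∑ t ∈ T, evalPair (f t) x := by
  simp only [evalPair_eq_linearCombination, map_sum]

lemma evalPair_smul_left (r : ℝ) (f x : c00) : evalPair (r • f) x = r * evalPair f x := by
  simp only [evalPair_eq_linearCombination, map_smul, smul_eq_mul]

lemma evalPair_comm (f x : c00) : evalPair f x = evalPair x f := by
  classical
  have h : ∀ f x : c00, evalPair f x = ∑ i ∈ f.support ∪ x.support, f i * x i := by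
    intro f x
    refine Finset.sum_subset Finset.subset_union_left fun i _ hi => ?_
    simp [Finsupp.notMem_support_iff.1 hi]
  rw [h, h, Finset.union_comm]
  exact Finset.sum_congr rfl fun i _ => mul_comm _ _

lemma evalPair_sum_right {ι : Type*} (T : Finset ι) (f : c00) (x : ι → c00) :
    evalPair f (∑ t ∈ T, x t) = ∑ t ∈ T, evalPair f (x t) := by
  simp only [evalPair_comm f, evalPair_sum_left]

lemma evalPair_smul_right (r : ℝ) (f x : c00) : evalPair f (r • x) = r * evalPair f x := by
  simp only [evalPair_comm f, evalPair_smul_left]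

lemma evalPair_add_right (f x y : c00) : evalPair f (x + y) = evalPair f x + evalPair f y := by
  simp only [evalPair_comm f, evalPair_eq_linearCombination, map_add]

lemma evalPair_eq_sum (f x : c00) : evalPair f x = ∑ i ∈ x.support, f i * x i := by
  rw [evalPair_comm]
  exact Finset.sum_congr rfl fun i _ => mul_comm _ _

lemma evalPair_eq_zero (f x : c00) (h : Disjoint f.support x.support) : evalPair f x = 0 := by
  rw [evalPair_eq_sum]
  refine Finset.sum_eq_zero fun i hi => ?_
  rw [Finsupp.notMem_support_iff.1 (Finset.disjoint_right.1 h hi), zero_mul]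

/-! ### The norming set -/

section NormingSet

variable {P : IWParams}

lemma two_le_m (P : IWParams) (j : ℕ) : 2 ≤ P.m j := by
  have := P.m_mono.monotone (Nat.zero_le j)
  rw [P.m_first] at this
  exact this

/-- The operation building weighted functionals, for families indexed by an arbitrary finite set
rather than enumerated in increasing order. -/
lemma WT_build {ι : Type*} (j : ℕ) (T : Finset ι) (g : ι → c00) (w : ι → ℕ∞)
    (hf : ∀ t ∈ T, WT P (g t) (w t)) (hne : ∀ t ∈ T, (g t).support.Nonempty)
    (hord : ∀ s ∈ T, ∀ t ∈ T, s ≠ t →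
      (Blocks (g s) (g t) ∧ (maxSupp (g s) : ℕ∞) < w t) ∨
      (Blocks (g t) (g s) ∧ (maxSupp (g t) : ℕ∞) < w s))
    (hS : (T.image fun t => minSupp (g t)) ∈ Schreier (P.n j)) :
    WT P ((P.m j : ℝ)⁻¹ • ∑ t ∈ T, g t) ((P.m j : ℕ) : ℕ∞) := by
  classical
  set u : ι → ℕ := fun t => minSupp (g t) with hu
  have hlt : ∀ s ∈ T, ∀ t ∈ T, u s < u t → Blocks (g s) (g t) ∧ (maxSupp (g s) : ℕ∞) < w t := by
    intro s hs t ht hst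
    rcases hord s hs t ht (by rintro rfl; exact lt_irrefl _ hst) with h | h
    · exact h
    · have h1 : maxSupp (g t) < u s := h.1
      have h2 : u t ≤ maxSupp (g t) := minSupp_le_maxSupp (hne t ht)
      omega
  have hinj : ∀ s ∈ T, ∀ t ∈ T, u s = u t → s = t := by
    intro s hs t ht hst
    by_contra hcon
    have h1 : u s ≤ maxSupp (g s) := minSupp_le_maxSupp (hne s hs)
    have h2 : u t ≤ maxSupp (g t) := minSupp_le_maxSupp (hne t ht)
    rcases hord s hs t ht hcon with h | h
    · have h3 : maxSupp (g s) < u t := h.1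
      omega
    · have h3 : maxSupp (g t) < u s := h.1
      omega
  let e := (T.image u).orderEmbOfFin rfl
  have he : ∀ k, ∃ t ∈ T, u t = e k := fun k =>
    Finset.mem_image.1 ((T.image u).orderEmbOfFin_mem rfl k)
  choose τ hτT hτ using he
  have hsurj : ∀ t ∈ T, ∃ k, τ k = t := by
    intro t ht
    have h : u t ∈ Set.range e := by
      rw [Finset.range_orderEmbOfFin]
      exact Finset.mem_coe.2 (Finset.mem_image_of_mem u ht)
    obtain ⟨k, hk⟩ := h
    exact ⟨k, hinj _ (hτT k) _ ht (by rw [hτ, hk])⟩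
  have hsum : ∑ t ∈ T, g t = ∑ k, g (τ k) := by
    symm
    refine Finset.sum_nbij τ (fun k _ => hτT k) ?_ ?_ (fun _ _ => rfl)
    · intro k _ l _ hkl
      apply e.injective
      rw [← hτ, ← hτ, hkl]
    · intro t ht
      obtain ⟨k, hk⟩ := hsurj t ht
      exact ⟨k, by simp, hk⟩
  have hτlt : ∀ q r, q < r → u (τ q) < u (τ r) := by
    intro q r hqr
    rw [hτ, hτ]
    exact e.strictMono hqr
  rw [hsum]
  refine WT.op j _ (fun k => g (τ k)) (fun k => w (τ k)) (fun k => hf _ (hτT k))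
    ⟨fun k => hne _ (hτT k), fun q r hqr => (hlt _ (hτT q) _ (hτT r) (hτlt q r hqr)).1, ?_⟩
    (fun q r hqr => (hlt _ (hτT q) _ (hτT r) (hτlt q r ?_)).2)
  · convert hS using 1
    ext i
    simp only [Finset.mem_image, Finset.mem_univ, true_and]
    constructor
    · rintro ⟨k, rfl⟩; exact ⟨τ k, hτT k, rfl⟩
    · rintro ⟨t, ht, rfl⟩
      obtain ⟨k, rfl⟩ := hsurj t ht
      exact ⟨k, rfl⟩
  · rw [Fin.lt_def]; omega

lemma disjoint_of_blocks {f g : c00} (h : Blocks f g) : Disjoint f.support g.support := by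
  rw [Finset.disjoint_left]
  intro i hi hi'
  have h1 := le_maxSupp hi
  have h2 := minSupp_le hi'
  have h3 : maxSupp f < minSupp g := h
  omega

/-- In a block sequence each coordinate of the sum comes from a single term. -/
lemma sum_apply_of_blocks {d : ℕ} (f : Fin d → c00)
    (h : ∀ q r : Fin d, q < r → Blocks (f q) (f r)) (q : Fin d) (i : ℕ)
    (hi : i ∈ (f q).support) : (∑ r, f r) i = f q i := by
  rw [Finsupp.finsetSum_apply]
  refine Finset.sum_eq_single q (fun r _ hr => ?_) (fun h => absurd (Finset.mem_univ q) h)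
  rw [← Finsupp.notMem_support_iff]
  intro hi'
  rcases lt_or_gt_of_ne hr with hlt | hlt
  · exact Finset.disjoint_left.1 (disjoint_of_blocks (h r q hlt)) hi' hi
  · exact Finset.disjoint_left.1 (disjoint_of_blocks (h q r hlt)) hi hi'

/-- Every coefficient of a functional in the norming set is `0` or the reciprocal of an integer
(recall `0⁻¹ = 0`). -/
lemma WT_coeff {f : c00} {w : ℕ∞} (h : WT P f w) (i : ℕ) : ∃ k : ℤ, f i = (k : ℝ)⁻¹ := by
  induction h with
  | unit i' s hs =>
    by_cases hi : i' = i
    · subst hi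
      rcases hs with rfl | rfl
      · exact ⟨1, by simp⟩
      · exact ⟨-1, by simp⟩
    · exact ⟨0, by simp [hi]⟩
  | op j d f w hf hadm hvfg ih =>
    by_cases hq : ∃ q, i ∈ (f q).support
    · obtain ⟨q, hq⟩ := hq
      obtain ⟨k, hk⟩ := ih q
      refine ⟨(P.m j : ℤ) * k, ?_⟩
      rw [Finsupp.smul_apply, sum_apply_of_blocks f hadm.2.1 q i hq, hk]
      push_cast
      rw [mul_inv, smul_eq_mul]
    · refine ⟨0, ?_⟩
      push Not at hq
      rw [Finsupp.smul_apply, Finsupp.finsetSum_apply,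
        Finset.sum_eq_zero fun q _ => Finsupp.notMem_support_iff.1 (hq q)]
      simp

lemma abs_inv_int_le (k : ℤ) : |(k : ℝ)⁻¹| ≤ 1 := by
  rcases eq_or_ne k 0 with rfl | hk
  · simp
  · rw [abs_inv]
    refine inv_le_one_of_one_le₀ ?_
    exact_mod_cast Int.one_le_abs hk

lemma abs_evalPair_le {f : c00} {w : ℕ∞} (h : WT P f w) (x : c00) :
    |evalPair f x| ≤ ∑ i ∈ x.support, |x i| := by
  rw [evalPair_eq_sum]
  refine (Finset.abs_sum_le_sum_abs _ _).trans (Finset.sum_le_sum fun i _ => ?_)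
  obtain ⟨k, hk⟩ := WT_coeff h i
  rw [abs_mul, hk]
  exact mul_le_of_le_one_left (abs_nonneg _) (abs_inv_int_le k)

lemma WT_neg {f : c00} {w : ℕ∞} (h : WT P f w) : WT P (-f) w := by
  induction h with
  | unit i s hs =>
    rw [← Finsupp.single_neg]
    refine WT.unit i (-s) ?_
    rcases hs with rfl | rfl
    · right; rfl
    · left; simp
  | op j d f w hf hadm hvfg ih =>
    have hsupp : ∀ q, (-f q).support = (f q).support := fun q => Finsupp.support_neg _
    have h := WT.op j d (fun q => -f q) w ih
      ⟨fun q => by rw [hsupp]; exact hadm.1 q, fun q r hqr => by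
        rw [Blocks, maxSupp_congr (hsupp q), minSupp_congr (hsupp r)]
        exact hadm.2.1 q r hqr, by
        simp only [minSupp_congr (hsupp _)]
        exact hadm.2.2⟩
      (fun q r hqr => by
        rw [maxSupp_congr (hsupp q)]
        exact hvfg q r hqr)
    simpa using h

lemma WT_zero (P : IWParams) : WT P 0 ((P.m 0 : ℕ) : ℕ∞) := by
  have h := WT.op (P := P) 0 0 (fun q => q.elim0) (fun q => q.elim0) (fun q => q.elim0)
    ⟨fun q => q.elim0, fun q => q.elim0, by
      rw [P.n_first]
      exact mem_schreier_one _ (by simp)⟩ (fun q => q.elim0)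
  simpa using h

/-- In an admissible very fast growing sequence every weight exceeds all earlier supports. -/
lemma vfg_lt {d : ℕ} {f : Fin d → c00} {w : Fin d → ℕ∞}
    (hne : ∀ q, (f q).support.Nonempty)
    (hb : ∀ q r : Fin d, q < r → Blocks (f q) (f r))
    (hvfg : ∀ q r : Fin d, (q : ℕ) + 1 = (r : ℕ) → (maxSupp (f q) : ℕ∞) < w r)
    (q r : Fin d) (hqr : q < r) : (maxSupp (f q) : ℕ∞) < w r := by
  have hr : (r : ℕ) - 1 < d := by have := r.2; omega
  have h1 := hvfg ⟨r - 1, hr⟩ r (by have := Fin.lt_def.1 hqr; simp only; omega)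
  refine lt_of_le_of_lt ?_ h1
  rcases eq_or_lt_of_le (show q ≤ ⟨(r : ℕ) - 1, hr⟩ by
    rw [Fin.le_def]; have := Fin.lt_def.1 hqr; simp only; omega) with h | h
  · rw [h]
  · have h2 := hb _ _ h
    have h3 := minSupp_le_maxSupp (hne ⟨(r : ℕ) - 1, hr⟩)
    have h4 : maxSupp (f q) < _ := h2
    exact_mod_cast (h4.le.trans h3)

/-- The norming set is closed under restriction to sets of coordinates. -/
lemma WT_filter {f : c00} {w : ℕ∞} (h : WT P f w) (A : Set ℕ) [DecidablePred (· ∈ A)] :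
    f.filter (· ∈ A) = 0 ∨ WT P (f.filter (· ∈ A)) w := by
  classical
  induction h with
  | unit i s hs =>
    by_cases hi : i ∈ A
    · right
      rw [Finsupp.filter_single_of_pos _ hi]
      exact WT.unit i s hs
    · left
      rw [Finsupp.filter_single_of_neg _ hi]
  | op j d f w hf hadm hvfg ih =>
    set g : Fin d → c00 := fun q => (f q).filter (· ∈ A) with hg
    have hsub : ∀ q, (g q).support ⊆ (f q).support := by
      intro q
      rw [hg, Finsupp.support_filter]
      exact Finset.filter_subset _ _
    let T : Finset (Fin d) := Finset.univ.filter fun q => g q ≠ 0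
    have hT : ∀ q ∈ T, g q ≠ 0 := fun q hq => (Finset.mem_filter.1 hq).2
    have hTne : ∀ q ∈ T, (g q).support.Nonempty := fun q hq =>
      Finsupp.support_nonempty_iff.2 (hT q hq)
    have hsum : ((P.m j : ℝ)⁻¹ • ∑ q, f q).filter (· ∈ A) = (P.m j : ℝ)⁻¹ • ∑ q ∈ T, g q := by
      rw [Finsupp.filter_smul, Finsupp.filter_sum]
      congr 1
      symm
      refine Finset.sum_subset (Finset.subset_univ _) fun q _ hq => ?_
      by_contra h
      exact hq (Finset.mem_filter.2 ⟨Finset.mem_univ _, h⟩)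
    rw [hsum]
    rcases T.eq_empty_or_nonempty with hTe | hTn
    · left; simp [hTe]
    right
    have hlt : ∀ s ∈ T, ∀ t ∈ T, s < t →
        Blocks (g s) (g t) ∧ (maxSupp (g s) : ℕ∞) < w t := by
      intro s hs t ht hst
      have h1 := maxSupp_mono (hTne s hs) (hsub s)
      have h2 := minSupp_anti (hTne t ht) (hsub t)
      have h3 : maxSupp (f s) < minSupp (f t) := hadm.2.1 s t hst
      refine ⟨show maxSupp (g s) < minSupp (g t) by omega, ?_⟩
      exact lt_of_le_of_lt (by exact_mod_cast h1) (vfg_lt hadm.1 hadm.2.1 hvfg s t hst)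
    have hflt : ∀ s t, s < t → minSupp (f s) < minSupp (f t) := fun s t hst =>
      lt_of_le_of_lt (minSupp_le_maxSupp (hadm.1 s)) (hadm.2.1 s t hst)
    refine WT_build j T g w (fun q hq => (ih q).resolve_left (hT q hq)) hTne ?_ ?_
    · intro s hs t ht hst
      rcases lt_or_gt_of_ne hst with h | h
      · exact Or.inl (hlt s hs t ht h)
      · exact Or.inr (hlt t ht s hs h)
    · refine schreier_spread _ _ hadm.2.2 T hTn _ (fun q => minSupp (f q)) ?_ ?_ ?_ ?_
      · intro t _
        exact Finset.mem_image_of_mem _ (Finset.mem_univ t)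
      · intro t ht
        exact minSupp_anti (hTne t ht) (hsub t)
      · intro s hs t ht hst
        rcases le_or_gt s t with h | h
        · rcases eq_or_lt_of_le h with rfl | h
          · exact le_rfl
          · exact (hflt s t h).le
        · have h1 : maxSupp (g t) < minSupp (g s) := (hlt t ht s hs h).1
          have h2 := minSupp_le_maxSupp (hTne t ht)
          omega
      · intro s _ t _ hst
        rcases lt_trichotomy s t with h | h | h
        · have := hflt s t h; omega
        · exact h
        · have := hflt t s h; omega

lemma tNorm_bddAbove (P : IWParams) (x : c00) :
    BddAbove {r | ∃ f, (∃ w, WT P f w) ∧ r = evalPair f x} := by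
  refine ⟨∑ i ∈ x.support, |x i|, ?_⟩
  rintro r ⟨f, ⟨w, hf⟩, rfl⟩
  exact (le_abs_self _).trans (abs_evalPair_le hf x)

lemma evalPair_le_tNorm {f : c00} {w : ℕ∞} (h : WT P f w) (x : c00) :
    evalPair f x ≤ tNorm P x := le_csSup (tNorm_bddAbove P x) ⟨f, ⟨w, h⟩, rfl⟩

lemma tNorm_le {x : c00} {r : ℝ} (h : ∀ f w, WT P f w → evalPair f x ≤ r) : tNorm P x ≤ r := by
  refine csSup_le ⟨_, 0, ⟨_, WT_zero P⟩, rfl⟩ ?_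
  rintro _ ⟨f, ⟨w, hf⟩, rfl⟩
  exact h f w hf

lemma abs_evalPair_le_tNorm {f : c00} {w : ℕ∞} (h : WT P f w) (x : c00) :
    |evalPair f x| ≤ tNorm P x := by
  rw [abs_le']
  refine ⟨evalPair_le_tNorm h x, ?_⟩
  have := evalPair_le_tNorm (WT_neg h) x
  rwa [← neg_one_smul ℝ f, evalPair_smul_left, neg_one_mul] at this

/-- The norm of `X̃_iw` as a bundled seminorm on `c00`. -/
noncomputable def tSeminorm (P : IWParams) : Seminorm ℝ c00 :=
  Seminorm.ofSMulLE (tNorm P)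
    (le_antisymm (tNorm_le fun f w _ => by rw [evalPair_eq_sum]; simp)
      (by have := evalPair_le_tNorm (WT_zero P) 0; simpa [evalPair] using this))
    (fun x y => tNorm_le fun f w hf => by
      rw [evalPair_add_right]
      exact add_le_add (evalPair_le_tNorm hf x) (evalPair_le_tNorm hf y))
    (fun r x => tNorm_le fun f w hf => by
      rw [evalPair_smul_right, Real.norm_eq_abs]
      refine (le_abs_self _).trans ?_
      rw [abs_mul]
      exact mul_le_mul_of_nonneg_left (abs_evalPair_le_tNorm hf x) (abs_nonneg _))

lemma tSeminorm_apply (x : c00) : tSeminorm P x = tNorm P x := rfl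

/-- The values `0` and `1/k`, `k ∈ ℤ`, form a compact set. -/
lemma isCompact_recip : IsCompact (insert 0 (Set.range fun k : ℤ => (k : ℝ)⁻¹)) := by
  refine Tendsto.isCompact_insert_range_of_cofinite ?_
  have h : Tendsto (fun k : ℤ => (k : ℝ)) cofinite (cocompact ℝ) :=
    Int.tendsto_coe_cofinite
  exact (tendsto_inv₀_cobounded (α := ℝ)).comp (by rwa [Metric.cobounded_eq_cocompact])

/-- The norm of a vector is attained in the norming set, by a functional supported inside the
support of the vector. Coordinatewise limits of functionals in the norming set are restrictions of
functionals in it, because the nonzero coefficients are reciprocals of integers and these are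
isolated; so the relevant part of the norming set is compact. -/
lemma exists_norming (P : IWParams) (y : c00) :
    ∃ f w, WT P f w ∧ f.support ⊆ y.support ∧ evalPair f y = tNorm P y := by
  classical
  let V : Set ℝ := insert 0 (Set.range fun k : ℤ => (k : ℝ)⁻¹)
  let D : Set (ℕ → ℝ) := {g | ∃ f w, WT P f w ∧ f.support ⊆ y.support ∧ g = ⇑f}
  have hDV : D ⊆ Set.pi Set.univ fun _ => V := by
    rintro g ⟨f, w, hf, -, rfl⟩ i -
    obtain ⟨k, hk⟩ := WT_coeff hf i
    exact Or.inr ⟨k, hk.symm⟩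
  have hcomp : IsCompact (Set.pi Set.univ fun _ : ℕ => V) :=
    isCompact_univ_pi fun _ => isCompact_recip
  have hclosed : IsClosed D := by
    refine isClosed_of_closure_subset fun g hg => ?_
    have hgV := closure_minimal hDV hcomp.isClosed hg
    let A : Finset ℕ := y.support.filter fun i => g i ≠ 0
    have hgs : ∀ i ∉ y.support, g i = 0 := by
      intro i hi
      have hc : IsClosed {h : ℕ → ℝ | h i = 0} :=
        isClosed_eq (continuous_apply i) continuous_const
      refine closure_minimal ?_ hc hg
      rintro h ⟨f, w, -, hs, rfl⟩
      exact Finsupp.notMem_support_iff.1 fun h => hi (hs h)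
    have hnear : ∀ᶠ h in 𝓝 g, ∀ i ∈ A, |(h i)⁻¹ - (g i)⁻¹| < 1 := by
      refine (Filter.eventually_all_finset A).2 fun i hi => ?_
      have hgi : g i ≠ 0 := (Finset.mem_filter.1 hi).2
      have ht : Tendsto (fun h : ℕ → ℝ => (h i)⁻¹) (𝓝 g) (𝓝 (g i)⁻¹) :=
        ((continuous_apply i).tendsto g).inv₀ hgi
      simpa only [Real.dist_eq] using Metric.tendsto_nhds.1 ht 1 one_pos
    obtain ⟨h, hh, f, w, hf, hs, rfl⟩ := mem_closure_iff_nhds.1 hg _ hnear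
    have hfg : ∀ i ∈ A, f i = g i := by
      intro i hi
      have hgi : g i ≠ 0 := (Finset.mem_filter.1 hi).2
      obtain ⟨k, hk⟩ := WT_coeff hf i
      have hV : g i ∈ V := hgV i trivial
      rcases hV with h0 | ⟨l, hl⟩
      · exact absurd h0 hgi
      · have h1 := hh i hi
        dsimp only at hl
        rw [hk, ← hl, inv_inv, inv_inv] at h1
        have h2 : |k - l| < 1 := by exact_mod_cast h1
        have h3 : k = l := by rw [Int.abs_lt_one_iff] at h2; omega
        rw [hk, ← hl, h3]
    have hgf : g = ⇑(f.filter (· ∈ (A : Set ℕ))) := by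
      funext i
      by_cases hi : i ∈ A
      · rw [Finsupp.filter_apply_pos _ _ (Finset.mem_coe.2 hi), hfg i hi]
      · rw [Finsupp.filter_apply_neg _ _ (by simpa using hi)]
        by_contra h0
        refine hi (Finset.mem_filter.2 ⟨?_, h0⟩)
        by_contra h1
        exact h0 (hgs i h1)
    rcases WT_filter hf (A : Set ℕ) with h0 | h1
    · exact ⟨0, _, WT_zero P, by simp, by rw [hgf, h0]⟩
    · refine ⟨_, w, h1, ?_, hgf⟩
      rw [Finsupp.support_filter]
      exact (Finset.filter_subset _ _).trans hs
  have hDc : IsCompact D := hcomp.of_isClosed_subset hclosed hDV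
  obtain ⟨g, ⟨f, w, hf, hs, rfl⟩, hmax⟩ := hDc.exists_isMaxOn
    ⟨_, 0, _, WT_zero P, by simp, rfl⟩
    (f := fun g : ℕ → ℝ => ∑ i ∈ y.support, g i * y i) (by fun_prop)
  refine ⟨f, w, hf, hs, le_antisymm (evalPair_le_tNorm hf y) ?_⟩
  refine tNorm_le fun f' w' hf' => ?_
  have hev : evalPair f' y = evalPair (f'.filter (· ∈ (y.support : Set ℕ))) y := by
    rw [evalPair_eq_sum, evalPair_eq_sum]
    refine Finset.sum_congr rfl fun i hi => ?_
    rw [Finsupp.filter_apply_pos _ _ (Finset.mem_coe.2 hi)]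
  have hmax' : ∀ h w'', WT P h w'' → h.support ⊆ y.support → evalPair h y ≤ evalPair f y := by
    intro h w'' hh hhs
    rw [evalPair_eq_sum, evalPair_eq_sum]
    exact hmax ⟨h, w'', hh, hhs, rfl⟩
  rw [hev]
  rcases WT_filter hf' (y.support : Set ℕ) with h0 | h1
  · rw [h0]
    exact hmax' 0 _ (WT_zero P) (by simp)
  · refine hmax' _ w' h1 ?_
    intro i hi
    rw [Finsupp.support_filter, Finset.mem_filter] at hi
    exact Finset.mem_coe.1 hi.2

end NormingSet

/-! ### Lower ℓ₁ estimates on a subsequence -/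

section Estimates

variable {P : IWParams} {x : ℕ → c00}

lemma block_lt (hx : IsNormBlockSeq (tNorm P) x) {i i' : ℕ} (h : i < i') :
    maxSupp (x i) < minSupp (x i') := by
  induction i', h using Nat.le_induction with
  | base => exact hx.2.1 i
  | succ n _ ih =>
    exact ih.trans_le ((minSupp_le_maxSupp (hx.1 n)).trans (le_of_lt (hx.2.1 n)))

lemma minSupp_strictMono (hx : IsNormBlockSeq (tNorm P) x) :
    StrictMono fun i => minSupp (x i) := fun _ _ h =>
  (minSupp_le_maxSupp (hx.1 _)).trans_lt (block_lt hx h)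

/-- A finite very fast growing block sequence `g` of weighted functionals, supported inside the
support of `y` and `S_K`-admissible, whose sum (without any weight factor) is at least `1`
on `y`. -/
structure IsPiece (P : IWParams) (K : ℕ) (y : c00) (d : ℕ) (g : Fin d → c00)
    (w : Fin d → ℕ∞) : Prop where
  mem : ∀ q, WT P (g q) (w q)
  nonempty : ∀ q, (g q).support.Nonempty
  sub : ∀ q, (g q).support ⊆ y.support
  ord : ∀ q r, q < r → Blocks (g q) (g r) ∧ (maxSupp (g q) : ℕ∞) < w r
  adm : (Finset.univ.image fun q => minSupp (g q)) ∈ Schreier K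
  one_le : 1 ≤ ∑ q, evalPair (g q) y

/-- If a functional of weight `m_j ≤ M` is at least `1` on a vector `y` of norm at most `1`, then
its components after the first still sum to at least `m_j - 1 ≥ 1` on `y`, and the very fast
growing condition makes all their weights exceed `minSupp y`. -/
lemma exists_piece_of_weight_le {y f : c00} {w : ℕ∞} {M : ℕ} (hy : tNorm P y ≤ 1)
    (hpos : 0 < minSupp y) (hf : WT P f w) (hs : f.support ⊆ y.support)
    (hv : 1 ≤ evalPair f y) (hw : w ≤ (M : ℕ∞)) :
    ∃ d g w', IsPiece P (P.n M) y d g w' ∧ ∀ q, (minSupp y : ℕ∞) < w' q := by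
  classical
  cases hf with
  | unit i s hs => exact absurd hw (by simp)
  | op j d f w' hf hadm hvfg =>
    have hm : (2 : ℝ) ≤ P.m j := by exact_mod_cast two_le_m P j
    have hsub : ∀ q, (f q).support ⊆ y.support := by
      intro q i hi
      apply hs
      rw [Finsupp.mem_support_iff, Finsupp.smul_apply, sum_apply_of_blocks f hadm.2.1 q i hi,
        smul_eq_mul]
      exact mul_ne_zero (inv_ne_zero (by linarith)) (Finsupp.mem_support_iff.1 hi)
    have hsum : (2 : ℝ) ≤ ∑ q, evalPair (f q) y := by
      rw [evalPair_smul_left, evalPair_sum_left, inv_mul_eq_div,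
        le_div_iff₀ (by linarith)] at hv
      linarith
    have hjM : j ≤ M := by
      have h1 : P.m j ≤ M := by exact_mod_cast hw
      exact (P.m_mono.id_le j).trans h1
    cases d with
    | zero => norm_num at hsum
    | succ d =>
      have h0 : evalPair (f 0) y ≤ 1 := (evalPair_le_tNorm (hf 0) y).trans hy
      rw [Fin.sum_univ_succ] at hsum
      have hne : (Finset.univ : Finset (Fin d)).Nonempty := by
        rw [Finset.nonempty_iff_ne_empty]
        intro h
        rw [h, Finset.sum_empty] at hsum
        linarith
      have hflt : ∀ s t, s < t → minSupp (f s) < minSupp (f t) := fun s t hst =>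
        lt_of_le_of_lt (minSupp_le_maxSupp (hadm.1 s)) (hadm.2.1 s t hst)
      refine ⟨d, fun q => f q.succ, fun q => w' q.succ,
        ⟨fun q => hf _, fun q => hadm.1 _, fun q => hsub _, fun q r hqr =>
          ⟨hadm.2.1 _ _ (Fin.succ_lt_succ_iff.2 hqr),
            vfg_lt hadm.1 hadm.2.1 hvfg _ _ (Fin.succ_lt_succ_iff.2 hqr)⟩, ?_, ?_⟩, ?_⟩
      · refine schreier_mono (P.n_mono.monotone hjM) _ ?_ ?_
        · refine schreier_spread _ _ hadm.2.2 Finset.univ hne _ (fun q => minSupp (f q.succ))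
            ?_ (fun _ _ => le_rfl) (fun _ _ _ _ h => h) ?_
          · intro t _
            exact Finset.mem_image_of_mem _ (Finset.mem_univ _)
          · intro s _ t _ hst
            have hinj : Function.Injective fun q => minSupp (f q) :=
              StrictMono.injective fun s t h => hflt s t h
            exact Fin.succ_injective _ (hinj hst)
        · intro h
          obtain ⟨q, -, hq⟩ := Finset.mem_image.1 h
          have := minSupp_anti (hadm.1 q.succ) (hsub q.succ)
          omega
      · linarith
      · intro q
        refine lt_of_le_of_lt ?_ (vfg_lt hadm.1 hadm.2.1 hvfg 0 q.succ (Fin.succ_pos q))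
        have := (minSupp_anti (hadm.1 0) (hsub 0)).trans (minSupp_le_maxSupp (hadm.1 0))
        exact_mod_cast this

/-- Along a subsequence the norm of each `x i` is witnessed by an `S_K`-admissible piece, with `K`
independent of `i`, all of whose weights exceed the supports of the earlier terms. Either the
weights of norming functionals stay bounded along a subsequence, and the norming functional minus
its first component is used, or they tend to infinity, and the norming functional itself is
used. -/
lemma exists_pieces (hx : IsNormBlockSeq (tNorm P) x) :
    ∃ L : Set ℕ, L.Infinite ∧ ∃ K : ℕ, ∀ i ∈ L, 1 ≤ i ∧
      ∃ d g w, IsPiece P K (x i) d g w ∧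
        ∀ i' ∈ L, i' < i → ∀ q, (maxSupp (x i') : ℕ∞) < w q := by
  classical
  choose f w hf hs hv using fun i => exists_norming P (x i)
  have hv1 : ∀ i, evalPair (f i) (x i) = 1 := fun i => (hv i).trans (hx.2.2 i)
  by_cases hcase : ∃ M : ℕ, {i | w i ≤ (M : ℕ∞)}.Infinite
  · obtain ⟨M, hM⟩ := hcase
    refine ⟨{i | w i ≤ (M : ℕ∞)} \ {0}, hM.sdiff (Set.finite_singleton 0), P.n M, ?_⟩
    rintro i ⟨hi, hi0⟩
    have hi1 : 1 ≤ i := Nat.one_le_iff_ne_zero.2 hi0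
    have hpos : 0 < minSupp (x i) := hi1.trans ((minSupp_strictMono hx).id_le i)
    obtain ⟨d, g, w', hp, hw'⟩ := exists_piece_of_weight_le (hx.2.2 i).le hpos (hf i) (hs i)
      (hv1 i).ge hi
    refine ⟨hi1, d, g, w', hp, fun i' _ hlt q => lt_trans ?_ (hw' q)⟩
    exact_mod_cast block_lt hx hlt
  · push Not at hcase
    obtain ⟨φ, hφ1, hφ⟩ := exists_seq_of_forall_finset_exists (fun i => 1 ≤ i)
      (fun a b => a < b ∧ (maxSupp (x a) : ℕ∞) < w b) (by
        intro s _
        have hfin : ((⋃ a ∈ s, {i | w i ≤ (maxSupp (x a) : ℕ∞)}) ∪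
            (Set.Iic (s.sup id + 1))).Finite :=
          (s.finite_toSet.biUnion fun a _ => hcase _).union (Set.finite_Iic _)
        obtain ⟨b, hb⟩ := hfin.exists_notMem
        simp only [Set.mem_union, Set.mem_iUnion, Set.mem_ofPred_eq, Set.mem_Iic, not_or,
          not_exists, not_le] at hb
        refine ⟨b, by omega, fun a ha => ⟨?_, hb.1 a ha⟩⟩
        have : a ≤ s.sup id := Finset.le_sup (f := id) ha
        omega)
    have hmono : StrictMono φ := fun a b h => (hφ a b h).1
    refine ⟨Set.range φ, Set.infinite_range_of_injective hmono.injective, 0, ?_⟩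
    rintro _ ⟨k, rfl⟩
    have hfne : (f (φ k)).support.Nonempty := by
      rw [Finsupp.support_nonempty_iff]
      intro h
      have := hv1 (φ k)
      rw [h, evalPair_eq_sum] at this
      simp at this
    refine ⟨hφ1 k, 1, fun _ => f (φ k), fun _ => w (φ k),
      ⟨fun _ => hf _, fun _ => hfne, fun _ => hs _, ?_, ?_, ?_⟩, ?_⟩
    · intro q r hqr
      exact absurd hqr (by rw [Subsingleton.elim q r]; exact lt_irrefl _)
    · exact ⟨minSupp (f (φ k)), by simp⟩
    · simp [hv1]
    · rintro _ ⟨k', rfl⟩ hlt _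
      exact (hφ k' k (hmono.lt_iff_lt.1 hlt)).2

/-- The pieces of the `x i`, `i ∈ F`, taken together form one admissible very fast growing
sequence, and the resulting functional of weight `m_j` gives the lower ℓ₁ estimate. -/
lemma lower_estimate (hx : IsNormBlockSeq (tNorm P) x) {L : Set ℕ} {K : ℕ}
    (hL : ∀ i ∈ L, 1 ≤ i ∧ ∃ d g w, IsPiece P K (x i) d g w ∧
        ∀ i' ∈ L, i' < i → ∀ q, (maxSupp (x i') : ℕ∞) < w q)
    (j k : ℕ) (hjk : k + K ≤ P.n j) (F : Finset ℕ) (hF : ↑F ⊆ L)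
    (hadm : (F.image fun i => minSupp (x i)) ∈ Schreier k) (c : ℕ → ℝ) :
    (1 / (P.m j : ℝ)) * ∑ i ∈ F, |c i| ≤ tNorm P (∑ i ∈ F, c i • x i) := by
  classical
  rcases F.eq_empty_or_nonempty with rfl | hFne
  · rw [Finset.sum_empty, mul_zero]
    exact apply_nonneg (tSeminorm P) _
  have hdata : ∀ i, ∃ d, ∃ (g : Fin d → c00) (w : Fin d → ℕ∞), i ∈ F →
      IsPiece P K (x i) d g w ∧ ∀ i' ∈ F, i' < i → ∀ q, (maxSupp (x i') : ℕ∞) < w q := by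
    intro i
    by_cases hi : i ∈ F
    · obtain ⟨-, d, g, w, hp, hw⟩ := hL i (hF hi)
      exact ⟨d, g, w, fun _ => ⟨hp, fun i' hi' => hw i' (hF hi')⟩⟩
    · exact ⟨0, fun q => q.elim0, fun q => q.elim0, fun h => absurd h hi⟩
  choose d g w hgw using hdata
  let σ : ℕ → ℝ := fun i => if 0 ≤ c i then 1 else -1
  have hσ : ∀ i, σ i ≠ 0 := by
    intro i
    by_cases h : 0 ≤ c i <;> simp [σ, h]
  have hσc : ∀ i, σ i * c i = |c i| := by
    intro i
    by_cases h : 0 ≤ c i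
    · simp [σ, h, abs_of_nonneg]
    · simp [σ, h, abs_of_neg (not_le.1 h)]
  let T : Finset (Σ i, Fin (d i)) := F.sigma fun i => Finset.univ
  let G : (Σ i, Fin (d i)) → c00 := fun t => σ t.1 • g t.1 t.2
  have hTF : ∀ t ∈ T, t.1 ∈ F := fun t ht => (Finset.mem_sigma.1 ht).1
  have hGs : ∀ t, (G t).support = (g t.1 t.2).support := fun t =>
    Finsupp.support_smul_eq (hσ t.1)
  have hGne : ∀ t ∈ T, (G t).support.Nonempty := fun t ht => by
    rw [hGs]; exact (hgw _ (hTF t ht)).1.nonempty _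
  have hGsub : ∀ t ∈ T, (G t).support ⊆ (x t.1).support := fun t ht => by
    rw [hGs]; exact (hgw _ (hTF t ht)).1.sub _
  have hmin : ∀ t ∈ T, minSupp (x t.1) ≤ minSupp (G t) := fun t ht =>
    minSupp_anti (hGne t ht) (hGsub t ht)
  have hmax : ∀ t ∈ T, maxSupp (G t) ≤ maxSupp (x t.1) := fun t ht =>
    maxSupp_mono (hGne t ht) (hGsub t ht)
  have hlt : ∀ s ∈ T, ∀ t ∈ T, s.1 < t.1 →
      Blocks (G s) (G t) ∧ (maxSupp (G s) : ℕ∞) < w t.1 t.2 := by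
    intro s hs t ht hst
    have h1 := block_lt hx hst
    have h2 := hmax s hs
    have h3 := hmin t ht
    refine ⟨show maxSupp (G s) < minSupp (G t) by omega, lt_of_le_of_lt ?_
      ((hgw _ (hTF t ht)).2 s.1 (hTF s hs) hst t.2)⟩
    exact_mod_cast h2
  have hne : T.Nonempty := by
    obtain ⟨i, hi⟩ := hFne
    have h1 := (hgw i hi).1.one_le
    have h2 : (Finset.univ : Finset (Fin (d i))).Nonempty := by
      rw [Finset.nonempty_iff_ne_empty]
      intro h
      rw [h, Finset.sum_empty] at h1
      linarith
    obtain ⟨q, hq⟩ := h2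
    exact ⟨⟨i, q⟩, Finset.mem_sigma.2 ⟨hi, hq⟩⟩
  have hWT : WT P ((P.m j : ℝ)⁻¹ • ∑ t ∈ T, G t) ((P.m j : ℕ) : ℕ∞) := by
    refine WT_build j T G (fun t => w t.1 t.2) ?_ hGne ?_ ?_
    · intro t ht
      have h := (hgw _ (hTF t ht)).1.mem t.2
      by_cases hc : 0 ≤ c t.1
      · simpa [G, σ, hc] using h
      · simpa [G, σ, hc] using WT_neg h
    · rintro ⟨i, q⟩ hs ⟨i', q'⟩ ht hst
      rcases lt_trichotomy i i' with h | rfl | h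
      · exact Or.inl (hlt _ hs _ ht h)
      · have hp := (hgw _ (hTF _ hs)).1
        have hG : ∀ q r : Fin (d i), q < r →
            Blocks (G ⟨i, q⟩) (G ⟨i, r⟩) ∧ (maxSupp (G ⟨i, q⟩) : ℕ∞) < w i r := by
          intro q r hqr
          rw [Blocks, maxSupp_congr (hGs _), minSupp_congr (hGs _)]
          exact hp.ord q r hqr
        have hqq : q ≠ q' := by rintro rfl; exact hst rfl
        rcases lt_or_gt_of_ne hqq with h | h
        · exact Or.inl (hG _ _ h)
        · exact Or.inr (hG _ _ h)
      · exact Or.inr (hlt _ ht _ hs h)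
    · refine schreier_mono (show K + k ≤ P.n j by omega) _ ?_ ?_
      · refine schreier_comp K k _ hadm T hne (fun t => minSupp (G t))
          (fun t => minSupp (x t.1)) ?_ hmin ?_ ?_
        · intro t ht
          exact Finset.mem_image_of_mem (fun i => minSupp (x i)) (hTF t ht)
        · intro s hs t ht hst
          by_contra hcon
          have h1 : t.1 < s.1 := by
            by_contra h
            exact hcon ((minSupp_strictMono hx).monotone (not_lt.1 h))
          have h2 : maxSupp (G t) < minSupp (G s) := (hlt t ht s hs h1).1
          have h3 := minSupp_le_maxSupp (hGne t ht)
          omega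
        · rintro ⟨i, q⟩ ht
          convert (hgw i (hTF _ ht)).1.adm using 1
          ext a
          simp only [Finset.mem_image, Finset.mem_filter, Finset.mem_univ, true_and]
          constructor
          · rintro ⟨⟨i', q'⟩, ⟨h1, h2⟩, rfl⟩
            obtain rfl : i' = i := (minSupp_strictMono hx).injective h2
            exact ⟨q', (minSupp_congr (hGs ⟨i', q'⟩)).symm⟩
          · rintro ⟨q', rfl⟩
            exact ⟨⟨i, q'⟩, ⟨Finset.mem_sigma.2 ⟨hTF ⟨i, q⟩ ht, Finset.mem_univ _⟩, rfl⟩,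
              minSupp_congr (hGs ⟨i, q'⟩)⟩
      · intro h
        obtain ⟨t, ht, h0⟩ := Finset.mem_image.1 h
        have h1 := hmin t ht
        have h2 := (hL _ (hF (hTF t ht))).1
        have h3 : t.1 ≤ minSupp (x t.1) := (minSupp_strictMono hx).id_le t.1
        omega
  refine le_trans ?_ (evalPair_le_tNorm hWT _)
  have hm : (0 : ℝ) ≤ (P.m j : ℝ)⁻¹ := by positivity
  rw [evalPair_smul_left, one_div]
  refine mul_le_mul_of_nonneg_left ?_ hm
  have hterm : ∀ t ∈ T, evalPair (G t) (∑ i ∈ F, c i • x i) =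
      |c t.1| * evalPair (g t.1 t.2) (x t.1) := by
    intro t ht
    rw [evalPair_sum_right, Finset.sum_eq_single t.1]
    · rw [evalPair_smul_right, evalPair_smul_left, ← hσc]
      ring
    · intro i _ hne
      rw [evalPair_smul_right, evalPair_eq_zero, mul_zero]
      refine Finset.disjoint_of_subset_left (hGsub t ht) ?_
      rcases lt_or_gt_of_ne hne with h | h
      · exact (disjoint_of_blocks (block_lt hx h)).symm
      · exact disjoint_of_blocks (block_lt hx h)
    · exact fun h => absurd (hTF t ht) h
  rw [evalPair_sum_left, Finset.sum_congr rfl hterm, Finset.sum_sigma]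
  refine Finset.sum_le_sum fun i hi => ?_
  dsimp only
  rw [← Finset.mul_sum]
  exact le_mul_of_one_le_right (abs_nonneg _) (hgw i hi).1.one_le

end Estimates

end IWT

/-- Let `(x_i)` be a normalized block sequence in `X̃_iw`.  Then there
are an infinite `L ⊆ ℕ` and `K₀ ∈ ℕ ∪ {0}` such that for all `j, k` with `k ≤ n_j − K₀`,
every finite `F ⊆ L` with `(x_i)_{i∈F}` being `S_k`-admissible and all scalars `(c_i)`,
`|||∑_{i∈F} c_i x_i||| ≥ (1/m_j) ∑ |c_i|`.  In particular every normalized block sequence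
in `X̃_iw` has a subsequence generating a spreading model equivalent to the unit vector
basis of ℓ₁. -/
theorem statement18 (P : IWParams) (x : ℕ → c00) (hx : IsNormBlockSeq (tNorm P) x) :
    (∃ L : Set ℕ, L.Infinite ∧ ∃ K0 : ℕ,
      ∀ j k : ℕ, k + K0 ≤ P.n j → ∀ F : Finset ℕ, ↑F ⊆ L →
        (F.image fun i => minSupp (x i)) ∈ Schreier k →
        ∀ c : ℕ → ℝ,
          (1 / (P.m j : ℝ)) * ∑ i ∈ F, |c i| ≤ tNorm P (∑ i ∈ F, c i • x i)) ∧
    ∃ φ : ℕ → ℕ, StrictMono φ ∧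
      ∃ ν, GeneratesSMwith (tNorm P) (x ∘ φ) ν ∧
        ∃ C : ℝ, 1 ≤ C ∧ NormFamEquiv C l1Norm ν := by
  classical
  obtain ⟨L, hLinf, K, hL⟩ := IWT.exists_pieces hx
  have hmain := IWT.lower_estimate hx hL
  refine ⟨⟨L, hLinf, K, hmain⟩, ?_⟩
  obtain ⟨φ₁, hφ₁, ν, hν⟩ := IWT.exists_spreadingModel (IWT.tSeminorm P)
    (fun k => x (Nat.nth (· ∈ L) k)) (fun k => (hx.2.2 _).le)
  have hnth : StrictMono (Nat.nth (· ∈ L)) := Nat.nth_strictMono hLinf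
  have hφ : StrictMono fun k => Nat.nth (· ∈ L) (φ₁ k) := hnth.comp hφ₁
  set φ : ℕ → ℕ := fun k => Nat.nth (· ∈ L) (φ₁ k) with hφdef
  have hφL : ∀ k, φ k ∈ L := fun k => Nat.nth_mem_of_infinite hLinf _
  have hgen : GeneratesSMwith (tNorm P) (x ∘ φ) ν := hν
  -- `n_{K+1} ≥ K + 1`, so the estimate applies to `S_1`-admissible sets with weight `m_{K+1}`.
  have hnK : 1 + K ≤ P.n (K + 1) := by
    have : K + 1 ≤ P.n (K + 1) := P.n_mono.id_le (K + 1)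
    omega
  have hm : (2 : ℝ) ≤ P.m (K + 1) := by exact_mod_cast IWT.two_le_m P (K + 1)
  refine ⟨φ, hφ, ν, hgen, P.m (K + 1), by linarith, P.m (K + 1), 1, by linarith, one_pos,
    by linarith, fun m a => ?_⟩
  have hbounds : ∀ j : Fin m → ℕ, StrictMono j → (∀ i, m ≤ j i) →
      (1 / (P.m (K + 1) : ℝ)) * l1Norm m a ≤ tNorm P (∑ i, a i • (x ∘ φ) (j i)) ∧
      tNorm P (∑ i, a i • (x ∘ φ) (j i)) ≤ l1Norm m a := by
    intro j hj hjm
    have hinj : Function.Injective fun i => φ (j i) := (hφ.comp hj).injective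
    constructor
    · have hext : ∀ i, Function.extend (fun i => φ (j i)) a 0 (φ (j i)) = a i := fun i =>
        hinj.extend_apply a 0 i
      have h := hmain (K + 1) 1 hnK (Finset.univ.image fun i => φ (j i)) ?_ ?_
        (Function.extend (fun i => φ (j i)) a 0)
      · rw [Finset.sum_image fun _ _ _ _ h => hinj h,
          Finset.sum_image fun _ _ _ _ h => hinj h] at h
        simp only [hext] at h
        exact h
      · intro i hi
        obtain ⟨q, -, rfl⟩ := Finset.mem_image.1 (Finset.mem_coe.1 hi)
        exact hφL _
      · refine IWT.mem_schreier_one _ fun b hb => ?_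
        obtain ⟨i, hi, rfl⟩ := Finset.mem_image.1 hb
        obtain ⟨q, -, rfl⟩ := Finset.mem_image.1 hi
        refine (Finset.card_image_le.trans Finset.card_image_le).trans ?_
        rw [Finset.card_univ, Fintype.card_fin]
        exact (hjm q).trans ((hφ.id_le _).trans ((IWT.minSupp_strictMono hx).id_le _))
    · refine (Finset.le_sum_of_subadditive (IWT.tSeminorm P) (map_zero _).le
        (map_add_le_add _) Finset.univ _).trans (Finset.sum_le_sum fun i _ => ?_)
      rw [map_smul_eq_mul, IWT.tSeminorm_apply, Function.comp_apply, hx.2.2, mul_one,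
        Real.norm_eq_abs]
  -- Both bounds hold up to `ε` for `ν`, by evaluating far out along the subsequence.
  have happrox : ∀ ε > 0, ∃ r, |r - ν m a| < ε ∧
      (1 / (P.m (K + 1) : ℝ)) * l1Norm m a ≤ r ∧ r ≤ l1Norm m a := by
    intro ε hε
    obtain ⟨N, hN⟩ := hgen m a ε hε
    have hj : StrictMono fun i : Fin m => N + m + (i : ℕ) := fun i i' h => by
      have := Fin.lt_def.1 h
      simp only
      omega
    exact ⟨_, hN _ hj (fun i => by omega), hbounds _ hj fun i => by omega⟩
  constructor
  · refine le_of_forall_pos_le_add fun ε hε => ?_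
    obtain ⟨r, h1, h2, h3⟩ := happrox ε hε
    have := (abs_lt.1 h1).2
    linarith
  · refine le_of_forall_pos_le_add fun ε hε => ?_
    obtain ⟨r, h1, h2, h3⟩ := happrox ε hε
    have := (abs_lt.1 h1).1
    linarith
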